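/- Let T be a locally simple complete CLO theory and let Φ ∈ IT(T). Then the set of complete theories {Th(Φ(A)) : A ⊨ T} (where Th(∅) denotes the theory of the empty structure, in case Φ(A) = ∅) is finite and each of its members is ℵ₀-categorical; moreover, this set has exactly one element if and only if Φ is isolated in IT(T). -/

import Mathlib

open FirstOrder Language Set

/-- Relation symbols of the language `L_κ` of colored linear orders:
a binary `<` and a unary color predicate for each `i : ι`. -/
inductive CLORel (ι : Type) : ℕ → Type
  | lt : CLORel ι 2
  | color (i : ι) : CLORel ι 1

/-- The language `L_κ`, where the colors are indexed by `ι`. -/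
def CLOLang (ι : Type) : Language :=
  ⟨fun _ => Empty, CLORel ι⟩

/-- Interpretation of the relation symbols on a linear order `M` with colors `c`. -/
def cloRelMap {ι M : Type} [LinearOrder M] (c : ι → Set M) :
    ∀ {n}, CLORel ι n → (Fin n → M) → Prop
  | _, .lt => fun v => v 0 < v 1
  | _, .color i => fun v => v 0 ∈ c i

/-- The canonical `L_κ`-structure (a colored linear order, CLO) on a linear
order `M` whose colors are given by `c : ι → Set M`. -/
def CLOStr (ι M : Type) [LinearOrder M] (c : ι → Set M) : (CLOLang ι).Structure M where
  funMap := fun f => Empty.elim f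
  RelMap := cloRelMap c

/-- Satisfaction of an `L_κ`-formula in the CLO `(M, <, c)`. -/
def Sat {ι : Type} (M : Type) [LinearOrder M] (c : ι → Set M) {α : Type}
    (φ : (CLOLang ι).Formula α) (v : α → M) : Prop :=
  letI := CLOStr ι M c
  φ.Realize v

/-- The induced colors on a subset of a CLO. -/
def subColor {ι M : Type} (c : ι → Set M) (s : Set M) : ι → Set s :=
  fun i => {x | (x : M) ∈ c i}

/-- Elementary equivalence of CLOs. -/
def CLOEquiv (ι : Type) (M : Type) [LinearOrder M] (cM : ι → Set M)
    (N : Type) [LinearOrder N] (cN : ι → Set N) : Prop :=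
  letI := CLOStr ι M cM
  letI := CLOStr ι N cN
  M ≅[CLOLang ι] N

/-- Isomorphism of CLOs (as `L_κ`-structures). -/
def CLOIso (ι : Type) (M : Type) [LinearOrder M] (cM : ι → Set M)
    (N : Type) [LinearOrder N] (cN : ι → Set N) : Prop :=
  letI := CLOStr ι M cM
  letI := CLOStr ι N cN
  Nonempty (M ≃[CLOLang ι] N)

/-- The complete theory of a CLO. -/
def CLOTheory (ι : Type) (M : Type) [LinearOrder M] (c : ι → Set M) : (CLOLang ι).Theory :=
  letI := CLOStr ι M c
  (CLOLang ι).completeTheory M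

/-- The induced colors on a lexicographic sum `Σₗ i, A i` of CLOs. -/
def sigmaColor {ι I : Type} {A : I → Type} (c : ∀ i, ι → Set (A i)) :
    ι → Set (Σₗ i, A i) :=
  fun k => {x | (ofLex x).2 ∈ c (ofLex x).1 k}

/-- The induced colors on a two-term lexicographic sum `α ⊕ₗ β` of CLOs. -/
def sumColor2 {ι α β : Type} (ca : ι → Set α) (cb : ι → Set β) : ι → Set (α ⊕ₗ β) :=
  fun k => {x | Sum.elim (· ∈ ca k) (· ∈ cb k) (ofLex x)}

/-- The set defined by a parameter-free formula in one variable in a CLO. -/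
def FmlSet (ι : Type) (M : Type) [LinearOrder M] (c : ι → Set M)
    (φ : (CLOLang ι).Formula Unit) : Set M :=
  {x | Sat M c φ fun _ => x}

/-- A CLO is self-additive if it has more than one point and its only
convex parameter-free-definable subsets are `∅` and the whole order. -/
def SelfAdditive (ι : Type) (M : Type) [LinearOrder M] (c : ι → Set M) : Prop :=
  Nontrivial M ∧
    ∀ φ : (CLOLang ι).Formula Unit, (FmlSet ι M c φ).OrdConnected →
      FmlSet ι M c φ = ∅ ∨ FmlSet ι M c φ = Set.univ

/-- `a ∼ b`: some set definable with parameter `a` is convex, bounded above and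
below, and contains both `a` and `b`. -/
def SimRel (ι : Type) {M : Type} [LinearOrder M] (c : ι → Set M) (a b : M) : Prop :=
  ∃ φ : (CLOLang ι).Formula (Unit ⊕ Unit),
    (Set.OrdConnected {x | Sat M c φ (Sum.elim (fun _ => x) fun _ => a)}) ∧
    (∃ u : M, ∀ z ∈ {x | Sat M c φ (Sum.elim (fun _ => x) fun _ => a)}, z < u) ∧
    (∃ l : M, ∀ z ∈ {x | Sat M c φ (Sum.elim (fun _ => x) fun _ => a)}, l < z) ∧
    a ∈ {x | Sat M c φ (Sum.elim (fun _ => x) fun _ => a)} ∧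
    b ∈ {x | Sat M c φ (Sum.elim (fun _ => x) fun _ => a)}

/-- `f : M → N` is an elementary map of CLOs. -/
def IsElemMap (ι : Type) {M N : Type} [LinearOrder M] [LinearOrder N]
    (cM : ι → Set M) (cN : ι → Set N) (f : M → N) : Prop :=
  ∀ (k : ℕ) (φ : (CLOLang ι).Formula (Fin k)) (v : Fin k → M),
    Sat M cM φ v ↔ Sat N cN φ (f ∘ v)

/-- A subset of a CLO, with its induced structure, is an elementary substructure. -/
def IsElemSubset (ι : Type) (B : Type) [LinearOrder B] (cB : ι → Set B) (s : Set B) : Prop :=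
  IsElemMap ι (subColor cB s) cB (Subtype.val : s → B)

/-- A complete `L_κ`-theory is ℵ₀-categorical: any two at-most-countable CLO
models of it are isomorphic.  (Finite and empty models are allowed.) -/
def Aleph0CatTheory (ι : Type) (T : (CLOLang ι).Theory) : Prop :=
  ∀ (N₁ N₂ : Type) (i₁ : LinearOrder N₁) (i₂ : LinearOrder N₂)
    (c₁ : ι → Set N₁) (c₂ : ι → Set N₂),
    Countable N₁ → Countable N₂ →
    (letI := i₁; CLOTheory ι N₁ c₁) = T → (letI := i₂; CLOTheory ι N₂ c₂) = T →
    (letI := i₁; letI := i₂; CLOIso ι N₁ c₁ N₂ c₂)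

/-- `φ` is a convex formula for the complete theory of the CLO `(M₀, c₀)`:
its realizations in every model of that theory form a convex set. -/
def ConvexFml (ι : Type) (M₀ : Type) [LinearOrder M₀] (c₀ : ι → Set M₀)
    (φ : (CLOLang ι).Formula Unit) : Prop :=
  ∀ (B : Type) (iB : LinearOrder B) (cB : ι → Set B),
    (letI := iB; CLOEquiv ι B cB M₀ c₀) → (letI := iB; Set.OrdConnected (FmlSet ι B cB φ))

/-- The set of common realizations of a set of one-variable formulas in a CLO. -/
def TypeSet (ι : Type) (M : Type) [LinearOrder M] (c : ι → Set M)
    (Φ : Set ((CLOLang ι).Formula Unit)) : Set M :=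
  {x | ∀ φ ∈ Φ, Sat M c φ fun _ => x}

/-- A set of one-variable formulas is consistent with the complete theory of
`(M₀, c₀)`: it is realized in some model of that theory. -/
def TypeConsistent (ι : Type) (M₀ : Type) [LinearOrder M₀] (c₀ : ι → Set M₀)
    (Φ : Set ((CLOLang ι).Formula Unit)) : Prop :=
  ∃ (B : Type) (iB : LinearOrder B) (cB : ι → Set B),
    (letI := iB; CLOEquiv ι B cB M₀ c₀) ∧ (letI := iB; ∃ b : B, b ∈ TypeSet ι B cB Φ)

/-- `Φ` is a convex type of the complete theory of `(M₀, c₀)`: a maximal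
consistent set of convex formulas over `∅`.  `IT(T)` is the set of all such. -/
def IsConvexType (ι : Type) (M₀ : Type) [LinearOrder M₀] (c₀ : ι → Set M₀)
    (Φ : Set ((CLOLang ι).Formula Unit)) : Prop :=
  (∀ φ ∈ Φ, ConvexFml ι M₀ c₀ φ) ∧ TypeConsistent ι M₀ c₀ Φ ∧
    ∀ ψ, ConvexFml ι M₀ c₀ ψ → TypeConsistent ι M₀ c₀ (insert ψ Φ) → ψ ∈ Φ

/-- A convex type is isolated if it contains a convex formula contained in no
other convex type. -/
def IsolatedCT (ι : Type) (M₀ : Type) [LinearOrder M₀] (c₀ : ι → Set M₀)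
    (Φ : Set ((CLOLang ι).Formula Unit)) : Prop :=
  ∃ φ ∈ Φ, ConvexFml ι M₀ c₀ φ ∧
    ∀ Ψ, IsConvexType ι M₀ c₀ Ψ → φ ∈ Ψ → Ψ = Φ

/-- A CLO is ℵ₀-saturated: every finitely-satisfiable set of formulas in one
variable over finitely many parameters is realized. -/
def Aleph0Saturated (ι : Type) (S : Type) [LinearOrder S] (cS : ι → Set S) : Prop :=
  ∀ (m : ℕ) (a : Fin m → S) (p : Set ((CLOLang ι).Formula (Unit ⊕ Fin m))),
    (∀ q : Finset ((CLOLang ι).Formula (Unit ⊕ Fin m)), ↑q ⊆ p →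
      ∃ x : S, ∀ φ ∈ q, Sat S cS φ (Sum.elim (fun _ => x) a)) →
    ∃ x : S, ∀ φ ∈ p, Sat S cS φ (Sum.elim (fun _ => x) a)

/-- A CLO is strongly ℵ₀-homogeneous: finite tuples with the same complete type
are conjugate under an automorphism. -/
def StronglyAleph0Homogeneous (ι : Type) (S : Type) [LinearOrder S] (cS : ι → Set S) : Prop :=
  ∀ (m : ℕ) (a b : Fin m → S),
    (∀ φ : (CLOLang ι).Formula (Fin m), Sat S cS φ a ↔ Sat S cS φ b) →
    ∃ g : S ≃ S, (∀ x y : S, x < y ↔ g x < g y) ∧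
      (∀ (k : ι) (x : S), x ∈ cS k ↔ g x ∈ cS k) ∧ ∀ i, g (a i) = b i

/-- Sufficiently saturated: ℵ₀-saturated and strongly ℵ₀-homogeneous. -/
def SuffSaturated (ι : Type) (S : Type) [LinearOrder S] (cS : ι → Set S) : Prop :=
  Aleph0Saturated ι S cS ∧ StronglyAleph0Homogeneous ι S cS

/-- The complete theory of `(M₀, c₀)` is locally simple: for every sufficiently
saturated model `S` and every convex type `Φ`, the theory `T_Φ = Th(Φ(S))` is
ℵ₀-categorical. -/
def LocallySimple (ι : Type) (M₀ : Type) [LinearOrder M₀] (c₀ : ι → Set M₀) : Prop :=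
  ∀ (S : Type) [LinearOrder S], ∀ (cS : ι → Set S),
    CLOEquiv ι S cS M₀ c₀ → SuffSaturated ι S cS →
    ∀ Φ, IsConvexType ι M₀ c₀ Φ →
      Aleph0CatTheory ι
        (CLOTheory ι (TypeSet ι S cS Φ) (subColor cS (TypeSet ι S cS Φ)))

/-- A finite set of pairs is a partial isomorphism of CLOs: it preserves `<`,
equality, and each color, in both directions. -/
def IsPartialIso (ι : Type) {M N : Type} [LinearOrder M] [LinearOrder N]
    (cM : ι → Set M) (cN : ι → Set N) (f : Finset (M × N)) : Prop :=
  ∀ p ∈ f, ∀ q ∈ f,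
    (p.1 < q.1 ↔ p.2 < q.2) ∧ (p.1 = q.1 ↔ p.2 = q.2) ∧
    ∀ k, p.1 ∈ cM k ↔ p.2 ∈ cN k

/-- Back-and-forth equivalence of CLOs: a nonempty family of finite partial
isomorphisms with the back-and-forth extension properties. -/
def BackForthEquiv (ι : Type) (M : Type) [LinearOrder M] (cM : ι → Set M)
    (N : Type) [LinearOrder N] (cN : ι → Set N) : Prop :=
  ∃ F : Set (Finset (M × N)), F.Nonempty ∧ (∀ f ∈ F, IsPartialIso ι cM cN f) ∧
    (∀ f ∈ F, ∀ m : M, ∃ g ∈ F, f ⊆ g ∧ ∃ n : N, (m, n) ∈ g) ∧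
    (∀ f ∈ F, ∀ n : N, ∃ g ∈ F, f ⊆ g ∧ ∃ m : M, (m, n) ∈ g)

/-- The set of complete theories `Th(Φ(A))` as `A` ranges over models of the
complete theory of `(M₀, c₀)` (including the theory of the empty structure,
in case `Φ` is omitted). -/
def TheoriesAt (ι : Type) (M₀ : Type) [LinearOrder M₀] (c₀ : ι → Set M₀)
    (Φ : Set ((CLOLang ι).Formula Unit)) : Set ((CLOLang ι).Theory) :=
  {T | ∃ (A : Type) (iA : LinearOrder A) (cA : ι → Set A),
    (letI := iA; CLOEquiv ι A cA M₀ c₀) ∧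
    T = (letI := iA; CLOTheory ι (TypeSet ι A cA Φ) (subColor cA (TypeSet ι A cA Φ)))}

namespace CLO

section General

variable {L : FirstOrder.Language.{0, 0}}

/-- Two assignments (possibly in different structures) satisfy the same formulas. -/
def SameType {M N : Type} [L.Structure M] [L.Structure N] {X : Type} (u : X → M) (v : X → N) :
    Prop :=
  ∀ φ : L.Formula X, φ.Realize u ↔ φ.Realize v

/-- A set of formulas is finitely satisfiable in `M` over the assignment `a` of parameters. -/
def FinSat {M : Type} [L.Structure M] {X Y : Type} (a : X → M) (p : Set (L.Formula (Y ⊕ X))) :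
    Prop :=
  ∀ q : Finset (L.Formula (Y ⊕ X)), ↑q ⊆ p → ∃ y : Y → M, ∀ φ ∈ q, φ.Realize (Sum.elim y a)

theorem exists_formula_realize_iff_exists {X W : Type} (χ : L.Formula (X ⊕ W)) :
    ∃ θ : L.Formula X, ∀ (M : Type) [L.Structure M] [Nonempty M] (u : X → M),
      θ.Realize u ↔ ∃ w : W → M, χ.Realize (Sum.elim u w) := by
  classical
  let f : χ.freeVarFinset → X ⊕ χ.freeVarFinset := fun z =>
    match z with
    | ⟨Sum.inl x, _⟩ => Sum.inl x
    | ⟨Sum.inr w, h⟩ => Sum.inr ⟨Sum.inr w, h⟩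
  refine ⟨Formula.iExs χ.freeVarFinset (BoundedFormula.restrictFreeVar χ f), ?_⟩
  intro M _ _ u
  rw [Formula.realize_iExs]
  constructor
  · rintro ⟨i, hi⟩
    let w : W → M := fun x => if h : Sum.inr x ∈ χ.freeVarFinset then i ⟨Sum.inr x, h⟩
      else Classical.arbitrary M
    refine ⟨w, ?_⟩
    refine (BoundedFormula.realize_restrictFreeVar (φ := χ) (f := f) (v' := Sum.elim u w) ?_).1 hi
    rintro ⟨x | x, h⟩
    · rfl
    · simp [f, w, h]
  · rintro ⟨w, hw⟩
    refine ⟨fun z => Sum.elim u w z.1, ?_⟩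
    refine (BoundedFormula.realize_restrictFreeVar (φ := χ) (f := f) (v' := Sum.elim u w) ?_).2 hw
    rintro ⟨x | x, h⟩ <;> rfl

theorem exists_elementaryExtension_realizing (V M : Type) [L.Structure M] [Nonempty M] :
    ∃ (N : Type) (_ : L.Structure N) (f : M ↪ₑ[L] N), ∀ p : Set (L.Formula (V ⊕ M)),
      FinSat (id : M → M) p → ∃ w : V → N, ∀ φ ∈ p, φ.Realize (Sum.elim w f) := by
  classical
  let I := Finset (L.Formula (V ⊕ M))
  let U : Ultrafilter I := Ultrafilter.of Filter.atTop
  have hU : ∀ φ, ∀ᶠ i : I in U, φ ∈ i := fun φ =>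
    Ultrafilter.of_le _ ((Filter.eventually_ge_atTop {φ}).mono fun i hi =>
      Finset.singleton_subset_iff.1 hi)
  refine ⟨(U : Filter I).Product fun _ => M, inferInstance,
    ⟨fun m => ((fun _ => m : I → M) : (U : Filter I).Product fun _ => M), ?_⟩, ?_⟩
  · intro n φ x
    exact (Ultraproduct.realize_formula_cast φ fun i (_ : I) => x i).trans
      Filter.eventually_const
  · intro p hp
    have : ∀ i : I, ∃ w : V → M, ∀ φ ∈ i, φ ∈ p → φ.Realize (Sum.elim w id) := fun i => by
      obtain ⟨w, hw⟩ := hp (i.filter (· ∈ p)) (fun φ hφ => (Finset.mem_filter.1 hφ).2)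
      exact ⟨w, fun φ h1 h2 => hw φ (Finset.mem_filter.2 ⟨h1, h2⟩)⟩
    choose w hw using this
    refine ⟨fun v => ((fun i => w i v : I → M) : (U : Filter I).Product fun _ => M), ?_⟩
    intro φ hφ
    have := (Ultraproduct.realize_formula_cast (u := U) φ
      fun z (i : I) => Sum.elim (w i) id z).2
      ((hU φ).mono fun i hi => hw i φ hi hφ)
    refine (congrArg φ.Realize (funext fun z => ?_)).mpr this
    rcases z with z | z <;> rfl

/-- An elementary extension realizing all countable types over the base and extending all partial
elementary self-maps of the base. -/
structure IsRich {M N : Type} [L.Structure M] [L.Structure N] (f : M ↪ₑ[L] N) : Prop where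
  realizes : ∀ {X Y : Type} [Countable Y] (a : X → M) (p : Set (L.Formula (Y ⊕ X))),
    FinSat a p → ∃ y : Y → N, ∀ φ ∈ p, φ.Realize (Sum.elim y (f ∘ a))
  extends_map : ∀ {X : Type} (u v : X → M), SameType (L := L) u v →
    ∃ h : M ↪ₑ[L] N, ∀ x, h (u x) = f (v x)

theorem exists_formula_forall_mem {X : Type} (q : Finset (L.Formula X)) :
    ∃ θ : L.Formula X, ∀ (M : Type) [L.Structure M] (u : X → M),
      θ.Realize u ↔ ∀ φ ∈ q, φ.Realize u := by
  classical
  induction q using Finset.induction_on with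
  | empty => exact ⟨⊤, fun M _ u => by simp⟩
  | insert φ q _ ih =>
    obtain ⟨θ, hθ⟩ := ih
    exact ⟨φ ⊓ θ, fun M _ u => by simp [hθ]⟩

theorem SameType.exists_realize {M N : Type} [L.Structure M] [L.Structure N] [Nonempty M]
    [Nonempty N] {X W : Type} {u : X → M} {v : X → N} (h : SameType (L := L) u v)
    (q : Finset (L.Formula (X ⊕ W))) (w : W → M) (hw : ∀ χ ∈ q, χ.Realize (Sum.elim u w)) :
    ∃ w' : W → N, ∀ χ ∈ q, χ.Realize (Sum.elim v w') := by
  obtain ⟨χ, hχ⟩ := exists_formula_forall_mem q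
  obtain ⟨θ, hθ⟩ := exists_formula_realize_iff_exists χ
  obtain ⟨w', hw'⟩ := (hθ N v).1 ((h θ).1 ((hθ M u).2 ⟨w, (hχ M _).2 hw⟩))
  exact ⟨w', (hχ N _).1 hw'⟩

theorem exists_isRich (M : Type) [L.Structure M] [Nonempty M] :
    ∃ (N : Type) (_ : L.Structure N) (f : M ↪ₑ[L] N), IsRich f := by
  classical
  obtain ⟨N, iN, f, hf⟩ := exists_elementaryExtension_realizing (L := L) (ℕ ⊕ M) M
  refine ⟨N, iN, f, ⟨?_, ?_⟩⟩
  · intro X Y _ a p hp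
    obtain ⟨e, he⟩ := exists_injective_nat Y
    let r : Y ⊕ X → (ℕ ⊕ M) ⊕ M := Sum.map (Sum.inl ∘ e) a
    obtain ⟨w, hw⟩ := hf (Formula.relabel r '' p) (by
      intro q hq
      obtain ⟨q', hq', rfl⟩ := Finset.subset_set_image_iff.1 hq
      obtain ⟨y, hy⟩ := hp q' hq'
      let w : ℕ ⊕ M → M := Sum.elim (Function.extend e y fun _ => Classical.arbitrary M) id
      refine ⟨w, fun φ hφ => ?_⟩
      obtain ⟨ψ, hψ, rfl⟩ := Finset.mem_image.1 hφ
      rw [Formula.realize_relabel]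
      convert hy ψ hψ using 1
      ext z
      rcases z with z | z
      · simp [r, w, he.extend_apply]
      · rfl)
    refine ⟨w ∘ Sum.inl ∘ e, fun φ hφ => ?_⟩
    have := hw _ ⟨φ, hφ, rfl⟩
    rw [Formula.realize_relabel] at this
    convert this using 1
    ext z
    rcases z with z | z <;> rfl
  · intro X u v huv
    let r : X ⊕ M → (ℕ ⊕ M) ⊕ M := Sum.elim (Sum.inr ∘ v) (Sum.inl ∘ Sum.inr)
    obtain ⟨w, hw⟩ := hf (Formula.relabel r '' {χ | χ.Realize (Sum.elim u id)}) (by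
      intro q hq
      obtain ⟨q', hq', rfl⟩ := Finset.subset_set_image_iff.1 hq
      obtain ⟨w, hw⟩ := huv.exists_realize q' id hq'
      refine ⟨Sum.elim (fun _ => Classical.arbitrary M) w, fun φ hφ => ?_⟩
      obtain ⟨ψ, hψ, rfl⟩ := Finset.mem_image.1 hφ
      rw [Formula.realize_relabel]
      convert hw ψ hψ using 1
      ext z
      rcases z with z | z <;> rfl)
    have key : ∀ χ : L.Formula (X ⊕ M), χ.Realize (Sum.elim u id) →
        χ.Realize (Sum.elim (f ∘ v) (w ∘ Sum.inr)) := fun χ hχ => by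
      have := hw _ ⟨χ, hχ, rfl⟩
      rw [Formula.realize_relabel] at this
      convert this using 1
      ext z
      rcases z with z | z <;> rfl
    refine ⟨⟨w ∘ Sum.inr, ?_⟩, ?_⟩
    · have key' : ∀ (n : ℕ) (φ : L.Formula (Fin n)) (x : Fin n → M), φ.Realize x →
          φ.Realize ((w ∘ Sum.inr) ∘ x) := fun n φ x hx => by
        have := key (φ.relabel (Sum.inr ∘ x)) (by rw [Formula.realize_relabel]; exact hx)
        rw [Formula.realize_relabel] at this
        exact this
      intro n φ x
      refine ⟨fun h => ?_, key' n φ x⟩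
      by_contra hx
      exact (key' n φ.not x hx) h
    · intro x
      exact (key (Term.equal (Term.var (Sum.inl x)) (Term.var (Sum.inr (u x))))
        (by simp)).symm

end General

section Chain

variable {L : FirstOrder.Language.{0, 0}}

/-- A total and surjective relation preserving all formulas is the graph of an isomorphism. -/
theorem exists_equiv_of_rel {M N : Type} [L.Structure M] [L.Structure N] (R : M → N → Prop)
    (htot : ∀ s, ∃ t, R s t) (hsurj : ∀ t, ∃ s, R s t)
    (hform : ∀ {l : ℕ} (φ : L.Formula (Fin l)) (s : Fin l → M) (t : Fin l → N),
      (∀ i, R (s i) (t i)) → (φ.Realize s ↔ φ.Realize t)) :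
    ∃ e : M ≃[L] N, ∀ s t, R s t → e s = t := by
  have hReq : ∀ {s t s' t'}, R s t → R s' t' → (s = s' ↔ t = t') := by
    intro s t s' t' h h'
    have := hform (Term.equal (Term.var 0) (Term.var 1) : L.Formula (Fin 2))
      ![s, s'] ![t, t'] (by intro i; fin_cases i <;> assumption)
    simpa using this
  choose F hF using htot
  have hFbij : Function.Bijective F :=
    ⟨fun s s' hss => (hReq (hF s) (hF s')).2 hss, fun t => by
      obtain ⟨s, hs⟩ := hsurj t
      exact ⟨s, (hReq (hF s) hs).1 rfl⟩⟩
  let E : M ↪ₑ[L] N := ⟨F, fun _ φ s => (hform φ s _ fun i => hF (s i)).symm⟩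
  exact ⟨⟨Equiv.ofBijective F hFbij, fun f x => E.map_fun f x, fun r x => E.map_rel r x⟩,
    fun s t h => (hReq (hF s) h).1 rfl⟩

theorem exists_limit_of_chain (G : ℕ → Type) [∀ n, L.Structure (G n)]
    (g : ∀ n, G n ↪ₑ[L] G (n + 1)) :
    ∃ (S : Type) (_ : L.Structure S) (j : ∀ n, G n ↪ₑ[L] S),
      (∀ n x, j (n + 1) (g n x) = j n x) ∧ ∀ s, ∃ n x, j n x = s := by
  let f := DirectedSystem.natLERec fun n => (g n).toEmbedding
  have hf : ∀ m n (h : m ≤ n), ∃ e : G m ↪ₑ[L] G n, ∀ x, e x = f m n h x := by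
    intro m n h
    induction n, h using Nat.le_induction with
    | base =>
      refine ⟨ElementaryEmbedding.refl L _, fun x => ?_⟩
      simp only [f, DirectedSystem.coe_natLERec, Nat.leRecOn_self]
      rfl
    | succ n h ih =>
      obtain ⟨e, he⟩ := ih
      refine ⟨(g n).comp e, fun x => ?_⟩
      simp only [f, DirectedSystem.coe_natLERec, Nat.leRecOn_succ h] at he ⊢
      rw [ElementaryEmbedding.comp_apply, he]
      rfl
  have key : ∀ (α : Type) (k : ℕ) (φ : L.BoundedFormula α k) (n : ℕ) (v : α → G n)
      (xs : Fin k → G n),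
      φ.Realize (DirectLimit.of L ℕ G f n ∘ v) (DirectLimit.of L ℕ G f n ∘ xs) ↔
        φ.Realize v xs := by
    intro α k φ
    induction φ with
    | falsum => intro n v xs; rfl
    | equal t₁ t₂ =>
      intro n v xs
      simp only [BoundedFormula.Realize, ← Sum.comp_elim, HomClass.realize_term]
      exact (DirectLimit.of L ℕ G f n).injective.eq_iff
    | rel R ts =>
      intro n v xs
      simp only [BoundedFormula.Realize, ← Sum.comp_elim, HomClass.realize_term]
      exact (DirectLimit.of L ℕ G f n).map_rel R fun i => (ts i).realize (Sum.elim v xs)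
    | imp _ _ ih₁ ih₂ =>
      intro n v xs
      simp only [BoundedFormula.Realize, ih₁, ih₂]
    | all φ ih =>
      intro n v xs
      simp only [BoundedFormula.Realize]
      constructor
      · intro h a
        rw [← ih, Fin.comp_snoc]
        exact h _
      · intro h a
        obtain ⟨m, y, rfl⟩ := DirectLimit.exists_of a
        obtain ⟨e, he⟩ := hf n (max m n) (le_max_right _ _)
        have h' : φ.all.Realize (e ∘ v) (e ∘ xs) := (e.map_boundedFormula φ.all v xs).2 h
        have h'' := (ih _ _ _).2 (h' (f m (max m n) (le_max_left _ _) y))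
        rw [Fin.comp_snoc, DirectLimit.of_f] at h''
        have hc : ∀ {β : Type} (z : β → G n), DirectLimit.of L ℕ G f (max m n) ∘ e ∘ z =
            DirectLimit.of L ℕ G f n ∘ z := fun z => funext fun x => by
          simp only [Function.comp_apply, he, DirectLimit.of_f]
        rw [hc, hc] at h''
        exact h''
  refine ⟨Language.DirectLimit G f, inferInstance,
    fun n => ⟨DirectLimit.of L ℕ G f n, fun k φ x => ?_⟩, ?_, ?_⟩
  · rw [Formula.Realize, Formula.Realize, ← key]
    exact iff_of_eq (congrArg _ (Subsingleton.elim _ _))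
  · intro n x
    have : g n x = f n (n + 1) (Nat.le_succ n) x := by
      simp only [f, DirectedSystem.coe_natLERec, Nat.leRecOn_succ']
      rfl
    change DirectLimit.of L ℕ G f (n + 1) (g n x) = DirectLimit.of L ℕ G f n x
    rw [this, DirectLimit.of_f]
  · intro s
    exact DirectLimit.exists_of s

/-- A nonempty first-order structure, bundled. -/
structure Str (L : FirstOrder.Language.{0, 0}) where
  carrier : Type
  str : L.Structure carrier
  nonempty : Nonempty carrier

theorem Str.exists_next (A : Str L) :
    ∃ B : Str L, letI := A.str; letI := B.str
      ∃ f : A.carrier ↪ₑ[L] B.carrier, IsRich f := by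
  letI := A.str
  haveI := A.nonempty
  obtain ⟨N, iN, f, hf⟩ := exists_isRich (L := L) A.carrier
  exact ⟨⟨N, iN, ⟨f (Classical.arbitrary _)⟩⟩, f, hf⟩

/-- A tower of rich elementary extensions above a given structure. -/
noncomputable def Str.tower (A : Str L) : ℕ → Str L
  | 0 => A
  | n + 1 => (Str.tower A n).exists_next.choose

theorem exists_rich_chain (M : Type) [L.Structure M] [Nonempty M] :
    ∃ (G : ℕ → Type) (_ : ∀ n, L.Structure (G n)) (g : ∀ n, G n ↪ₑ[L] G (n + 1)),
      Nonempty (M ↪ₑ[L] G 0) ∧ ∀ n, IsRich (g n) := by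
  let A : Str L := ⟨M, inferInstance, inferInstance⟩
  exact ⟨fun n => (A.tower n).carrier, fun n => (A.tower n).str,
    fun n => (A.tower n).exists_next.choose_spec.choose,
    ⟨ElementaryEmbedding.refl L M⟩, fun n => (A.tower n).exists_next.choose_spec.choose_spec⟩

theorem elim_comp_swap {α β γ : Type} (f : α → γ) (g : β → γ) :
    Sum.elim f g ∘ Sum.swap = Sum.elim g f := by
  ext (x | x) <;> rfl

theorem FinSat.of_elementary {M N : Type} [L.Structure M] [L.Structure N] [Nonempty M]
    (f : M ↪ₑ[L] N) {X Y : Type} {a : X → M} {p : Set (L.Formula (Y ⊕ X))}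
    (h : FinSat (f ∘ a) p) : FinSat a p := by
  classical
  haveI : Nonempty N := ⟨f (Classical.arbitrary M)⟩
  intro q hq
  obtain ⟨y, hy⟩ := h q hq
  have hs : SameType (L := L) (f ∘ a) a := fun φ => f.map_formula φ a
  obtain ⟨w, hw⟩ := hs.exists_realize (q.image (Formula.relabel Sum.swap)) y (by
    intro χ hχ
    obtain ⟨φ, hφ, rfl⟩ := Finset.mem_image.1 hχ
    rw [Formula.realize_relabel, elim_comp_swap]
    exact hy φ hφ)
  refine ⟨w, fun φ hφ => ?_⟩
  have := hw _ (Finset.mem_image_of_mem _ hφ)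
  rwa [Formula.realize_relabel, elim_comp_swap] at this

/-- Every nonempty structure has an elementary extension which is `ℵ₀`-saturated, strongly
`ℵ₀`-homogeneous, and realizes all types over `∅` in countably many variables. -/
theorem exists_saturated_homogeneous (M : Type) [L.Structure M] [Nonempty M] :
    ∃ (S : Type) (_ : L.Structure S) (_ : M ↪ₑ[L] S),
      (∀ (m : ℕ) (Y : Type) [Countable Y] (a : Fin m → S) (p : Set (L.Formula (Y ⊕ Fin m))),
        FinSat a p → ∃ y : Y → S, ∀ φ ∈ p, φ.Realize (Sum.elim y a)) ∧
      ∀ (m : ℕ) (a b : Fin m → S), SameType (L := L) a b →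
        ∃ e : S ≃[L] S, ∀ i, e (a i) = b i := by
  obtain ⟨G, iG, g, ⟨e⟩, hg⟩ := exists_rich_chain (L := L) M
  obtain ⟨S, iS, j, hj, hsurj⟩ := exists_limit_of_chain G g
  have hne : ∀ n, Nonempty (G n) := by
    intro n
    induction n with
    | zero => exact ⟨e (Classical.arbitrary M)⟩
    | succ n ih => exact ⟨g n ih.some⟩
  have hup : ∀ (s : S) (n : ℕ) (x : G n), j n x = s → ∀ k, ∃ y : G (n + k), j (n + k) y = s := by
    intro s n x hx k
    induction k with
    | zero => exact ⟨x, hx⟩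
    | succ k ih =>
      obtain ⟨y, hy⟩ := ih
      exact ⟨g _ y, (hj _ y).trans hy⟩
  have hup' : ∀ (s : S) (n : ℕ) (x : G n), j n x = s → ∀ k, n ≤ k → ∃ y : G k, j k y = s := by
    intro s n x hx k hk
    obtain ⟨d, rfl⟩ := Nat.exists_eq_add_of_le hk
    exact hup s n x hx d
  have hfin : ∀ (m : ℕ) (a : Fin m → S), ∃ n, ∀ k, n ≤ k → ∃ a' : Fin m → G k, j k ∘ a' = a := by
    intro m a
    choose n x hx using fun i => hsurj (a i)
    obtain ⟨N, hN⟩ := (Set.finite_range n).bddAbove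
    refine ⟨N, fun k hk => ?_⟩
    choose a' ha' using fun i => hup' (a i) (n i) (x i) (hx i) k ((hN ⟨i, rfl⟩).trans hk)
    exact ⟨a', funext ha'⟩
  refine ⟨S, iS, (j 0).comp e, ?_, ?_⟩
  · intro m Y _ a p hp
    obtain ⟨n, hn⟩ := hfin m a
    obtain ⟨a', rfl⟩ := hn n le_rfl
    obtain ⟨y, hy⟩ := (hg n).realizes a' p (FinSat.of_elementary (j n) hp)
    refine ⟨j (n + 1) ∘ y, fun φ hφ => ?_⟩
    have := (ElementaryEmbedding.map_formula (j (n + 1)) φ _).2 (hy φ hφ)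
    rw [Sum.comp_elim] at this
    convert this using 2
    ext i
    exact (hj n (a' i)).symm
  · intro m a b hab
    obtain ⟨n₁, hn₁⟩ := hfin m a
    obtain ⟨n₂, hn₂⟩ := hfin m b
    obtain ⟨a', rfl⟩ := hn₁ (max n₁ n₂) (le_max_left _ _)
    obtain ⟨b', rfl⟩ := hn₂ (max n₁ n₂) (le_max_right _ _)
    generalize max n₁ n₂ = n at a' b' hab
    have hab' : SameType (L := L) a' b' := fun φ => by
      rw [← (j n).map_formula, ← (j n).map_formula φ b']
      exact hab φ
    obtain ⟨h₀, hh₀⟩ := (hg n).extends_map a' b' hab'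
    have hnext : ∀ (k : ℕ) (h : G k ↪ₑ[L] G (k + 1)), ∃ h' : G (k + 1) ↪ₑ[L] G (k + 1 + 1),
        ∀ x, h' (h x) = g (k + 1) (g k x) := fun k h =>
      (hg (k + 1)).extends_map h (g k) fun φ =>
        (h.map_formula φ id).trans ((g k).map_formula φ id).symm
    choose nx hnx using hnext
    let H : ∀ k, G (n + k) ↪ₑ[L] G (n + k + 1) := fun k => Nat.rec h₀ (fun k h => nx (n + k) h) k
    have hH : ∀ k x, H (k + 1) (H k x) = g (n + k + 1) (g (n + k) x) := fun k x =>
      hnx (n + k) (H k) x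
    have hcoh : ∀ k x, j (n + (k + 2) + 1) (H (k + 2) (g (n + k + 1) (g (n + k) x))) =
        j (n + k + 1) (H k x) := by
      intro k x
      have h1 := hH (k + 1) (H k x)
      rw [← hH k x]
      exact (congrArg (j (n + (k + 2) + 1)) h1).trans ((hj (n + k + 2) _).trans (hj (n + k + 1) _))
    let R : S → S → Prop := fun s t =>
      ∃ (k : ℕ) (x : G (n + 2 * k)), s = j _ x ∧ t = j _ (H (2 * k) x)
    have hlift : ∀ (k d : ℕ) (x : G (n + 2 * k)), ∃ y : G (n + 2 * (k + d)),
        j _ y = j _ x ∧ j _ (H (2 * (k + d)) y) = j _ (H (2 * k) x) := by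
      intro k d x
      induction d with
      | zero => exact ⟨x, rfl, rfl⟩
      | succ d ih =>
        obtain ⟨y, hy1, hy2⟩ := ih
        refine ⟨g (n + 2 * (k + d) + 1) (g (n + 2 * (k + d)) y), ?_, ?_⟩
        · exact ((hj _ _).trans (hj _ _)).trans hy1
        · exact (hcoh (2 * (k + d)) y).trans hy2
    have hlift' : ∀ (k l : ℕ) (_ : k ≤ l) (x : G (n + 2 * k)), ∃ y : G (n + 2 * l),
        j _ y = j _ x ∧ j _ (H (2 * l) y) = j _ (H (2 * k) x) := by
      intro k l hkl x
      obtain ⟨d, rfl⟩ := Nat.exists_eq_add_of_le hkl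
      exact hlift k d x
    have hRtot : ∀ s, ∃ t, R s t := by
      intro s
      obtain ⟨k, x, rfl⟩ := hsurj s
      obtain ⟨y, hy⟩ := hup' _ k x rfl (n + 2 * k) (by omega)
      exact ⟨_, k, y, hy.symm, rfl⟩
    have hRsurj : ∀ t, ∃ s, R s t := by
      intro t
      obtain ⟨k, x, rfl⟩ := hsurj t
      obtain ⟨y, hy⟩ := hup' _ k x rfl (n + (2 * k + 1)) (by omega)
      refine ⟨_, k + 1, H (2 * k + 1) y, rfl, ?_⟩
      rw [← hy]
      exact (((congrArg (j _) (hH (2 * k + 1) y)).trans (hj _ _)).trans (hj _ _)).symm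
    have hRform : ∀ {l : ℕ} (φ : L.Formula (Fin l)) (s t : Fin l → S), (∀ i, R (s i) (t i)) →
        (φ.Realize s ↔ φ.Realize t) := by
      intro l φ s t hst
      choose k x hs ht using hst
      obtain ⟨N, hN⟩ := (Set.finite_range k).bddAbove
      choose y hy1 hy2 using fun i => hlift' (k i) N (hN ⟨i, rfl⟩) (x i)
      have e1 : s = j _ ∘ y := funext fun i => (hs i).trans (hy1 i).symm
      have e2 : t = j _ ∘ H (2 * N) ∘ y := funext fun i => (ht i).trans (hy2 i).symm
      rw [e1, e2, (j _).map_formula, (j _).map_formula, (H _).map_formula]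
    obtain ⟨e, he⟩ := exists_equiv_of_rel R hRtot hRsurj hRform
    refine ⟨e, fun i => he _ _ ?_⟩
    refine ⟨0, a' i, rfl, ?_⟩
    refine Eq.trans ?_ (congrArg (j (n + 1)) (hh₀ i)).symm
    exact (hj n (b' i)).symm

end Chain

section RyllNardzewski

variable {L : FirstOrder.Language.{0, 0}}

theorem exists_realize_of_elementarilyEquivalent {M N : Type} [L.Structure M] [L.Structure N]
    [Nonempty M] [Nonempty N] (h : M ≅[L] N) {X : Type} (χ : L.Formula X)
    (hM : ∃ u : X → M, χ.Realize u) : ∃ u : X → N, χ.Realize u := by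
  obtain ⟨θ, hθ⟩ := exists_formula_realize_iff_exists (X := Empty)
    (χ.relabel (Sum.inr : X → Empty ⊕ X))
  have h1 : ∀ (P : Type) [L.Structure P] [Nonempty P],
      Sentence.Realize P θ ↔ ∃ u : X → P, χ.Realize u := by
    intro P _ _
    refine (hθ P default).trans ?_
    simp only [Formula.realize_relabel, Sum.elim_comp_inr]
  exact (h1 N).1 ((elementarilyEquivalent_iff.1 h θ).1 ((h1 M).2 hM))

theorem forall_realize_of_elementarilyEquivalent {M N : Type} [L.Structure M] [L.Structure N]
    [Nonempty M] [Nonempty N] (h : M ≅[L] N) {X : Type} (χ : L.Formula X)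
    (hM : ∀ u : X → M, χ.Realize u) : ∀ u : X → N, χ.Realize u := by
  intro u
  by_contra hu
  obtain ⟨w, hw⟩ := exists_realize_of_elementarilyEquivalent h.symm χ.not ⟨u, hu⟩
  exact hw (hM w)

theorem realize_congr_freeVar {M X : Type} [L.Structure M] [DecidableEq X] (φ : L.Formula X)
    {u v : X → M} (h : ∀ x ∈ φ.freeVarFinset, u x = v x) : φ.Realize u ↔ φ.Realize v := by
  have key : ∀ w : X → M, _ ↔ φ.Realize w := fun w =>
    BoundedFormula.realize_restrictFreeVar' (φ := φ) (s := ↑φ.freeVarFinset) subset_rfl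
  rw [← key u, ← key v]
  have : u ∘ ((↑) : (↑φ.freeVarFinset : Set X) → X) = v ∘ (↑) := funext fun x => h x.1 x.2
  rw [this]

/-- The Tarski–Vaught test for a subset of a structure in a relational language. -/
theorem exists_elementarySubstructure_of_set [L.IsRelational] {N : Type} [L.Structure N]
    (D : Set N) (h : ∀ (n : ℕ) (φ : L.Formula (Fin (n + 1))) (x : Fin n → N), (∀ i, x i ∈ D) →
      (∃ a, φ.Realize (Fin.snoc x a : Fin (n + 1) → N)) →
        ∃ b ∈ D, φ.Realize (Fin.snoc x b : Fin (n + 1) → N)) :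
    ∃ S : L.ElementarySubstructure N, (S : Set N) = D := by
  let S : L.Substructure N := ⟨D, fun f => isEmptyElim f⟩
  refine ⟨S.toElementarySubstructure fun n φ x a ha => ?_, rfl⟩
  have key : ∀ b : N, Formula.Realize (φ.toFormula.relabel (Sum.elim Empty.elim id))
      (Fin.snoc ((↑) ∘ x) b : Fin (n + 1) → N) ↔
      φ.Realize default (Fin.snoc ((↑) ∘ x) b : _ → N) := fun b => by
    rw [Formula.realize_relabel, BoundedFormula.realize_toFormula]
    exact iff_of_eq (congrArg₂ _ (Subsingleton.elim _ _) rfl)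
  obtain ⟨b, hb, hb'⟩ := h n _ _ (fun i => (x i).2) ⟨a, (key a).2 ha⟩
  exact ⟨⟨b, hb⟩, (key b).1 hb'⟩

theorem exists_countable_elementaryEmbedding [Countable L.Symbols] {M : Type} [L.Structure M]
    {n : ℕ} (b : Fin n → M) :
    ∃ (N : Type) (_ : L.Structure N) (f : N ↪ₑ[L] M) (b' : Fin n → N),
      Countable N ∧ f ∘ b' = b := by
  rcases le_total (Cardinal.mk M) Cardinal.aleph0 with hM | hM
  · exact ⟨M, inferInstance, ElementaryEmbedding.refl L M, b, Cardinal.mk_le_aleph0_iff.1 hM, rfl⟩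
  · obtain ⟨S, hS, hc⟩ := exists_elementarySubstructure_card_eq L (Set.range b) Cardinal.aleph0.{0}
      le_rfl (by simpa using (Set.countable_range b).le_aleph0)
      (by simpa [Language.card] using Cardinal.mk_le_aleph0_iff.2 ‹Countable L.Symbols›)
      (by simpa using hM)
    refine ⟨S, inferInstance, S.subtype, fun i => ⟨b i, hS ⟨i, rfl⟩⟩, ?_, rfl⟩
    exact Cardinal.mk_le_aleph0_iff.1 (by simpa using hc.le)

/-- The omitting types theorem: a countable structure elementarily equivalent to `M` omits a
given non-principal partial type. -/
theorem exists_countable_omitting [Countable L.Symbols] [L.IsRelational] (M : Type)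
    [L.Structure M] [Nonempty M] {n : ℕ} (p : Set (L.Formula (Fin n)))
    (hp : ∀ θ : L.Formula (Fin n), (∃ x : Fin n → M, θ.Realize x) →
      ∃ φ ∈ p, ∃ x : Fin n → M, θ.Realize x ∧ ¬ φ.Realize x) :
    ∃ (N : Type) (_ : L.Structure N), Countable N ∧ Nonempty N ∧ (M ≅[L] N) ∧
      ∀ x : Fin n → N, ∃ φ ∈ p, ¬ φ.Realize x := by
  classical
  let Q := {ψ : L.Formula ℕ // ∃ s : ℕ → M, ψ.Realize s}
  letI : Preorder Q := Preorder.lift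
    (fun ψ => OrderDual.toDual {s : ℕ → M | ψ.1.Realize s})
  have hle : ∀ {ψ ψ' : Q}, ψ ≤ ψ' ↔ ∀ s : ℕ → M, ψ'.1.Realize s → ψ.1.Realize s := Iff.rfl
  let I := (Σ k : ℕ, L.Formula (Fin (k + 1)) × (Fin k → ℕ)) ⊕ (Fin n → ℕ)
  haveI : Encodable I := Encodable.ofCountable I
  let D : I → Set Q := fun i => match i with
    | Sum.inl ⟨_, φ, t⟩ => {ψ | ∃ m, ∀ s : ℕ → M, ψ.1.Realize s →
        ∀ a, φ.Realize (Fin.snoc (s ∘ t) a : _ → M) → φ.Realize (Fin.snoc (s ∘ t) (s m) : _ → M)}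
    | Sum.inr t => {ψ | ∃ χ ∈ p, ∀ s : ℕ → M, ψ.1.Realize s → ¬ χ.Realize (s ∘ t)}
  have hD : ∀ i, IsCofinal (D i) := by
    rintro (⟨k, φ, t⟩ | t) ⟨ψ, s, hs⟩
    · by_cases ha : ∃ (s : ℕ → M) (a : M), ψ.Realize s ∧
        φ.Realize (Fin.snoc (s ∘ t) a : _ → M)
      · obtain ⟨s, a, hs, ha⟩ := ha
        obtain ⟨m, hm⟩ := Infinite.exists_notMem_finset
          (ψ.freeVarFinset ∪ Finset.univ.image t)
        rw [Finset.mem_union, not_or] at hm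
        have hst : Function.update s m a ∘ t = s ∘ t := by
          ext i
          have : t i ≠ m := fun h => hm.2 (by simp [← h])
          simp [this]
        refine ⟨⟨ψ ⊓ φ.relabel (Fin.snoc t m : _ → ℕ), Function.update s m a, ?_⟩, ⟨m, ?_⟩, ?_⟩
        · rw [Formula.realize_inf, Formula.realize_relabel, Fin.comp_snoc, hst]
          refine ⟨(realize_congr_freeVar ψ fun x hx => ?_).2 hs, by simpa using ha⟩
          have : x ≠ m := fun h => hm.1 (h ▸ hx)
          simp [this]
        · intro s hs a _
          rw [Formula.realize_inf, Formula.realize_relabel, Fin.comp_snoc] at hs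
          exact hs.2
        · exact hle.2 fun s hs => (Formula.realize_inf.1 hs).1
      · push Not at ha
        exact ⟨⟨ψ, s, hs⟩, ⟨0, fun s hs a h => absurd h (ha s a hs)⟩, le_rfl⟩
    · obtain ⟨E, hE⟩ := exists_formula_forall_mem (Finset.univ.image fun i : Fin n =>
        (Term.equal (Term.var (Sum.inl i)) (Term.var (Sum.inr (t i))) : L.Formula (Fin n ⊕ ℕ)))
      obtain ⟨θ, hθ⟩ := exists_formula_realize_iff_exists (ψ.relabel Sum.inr ⊓ E)
      have hθ' : ∀ y : Fin n → M, θ.Realize y ↔ ∃ s : ℕ → M, ψ.Realize s ∧ y = s ∘ t := by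
        intro y
        rw [hθ M]
        refine exists_congr fun s => ?_
        rw [Formula.realize_inf, Formula.realize_relabel, Sum.elim_comp_inr, hE]
        simp [funext_iff]
      obtain ⟨χ, hχ, x, hx, hx'⟩ := hp θ ⟨s ∘ t, (hθ' _).2 ⟨s, hs, rfl⟩⟩
      obtain ⟨s', hs', rfl⟩ := (hθ' _).1 hx
      refine ⟨⟨ψ ⊓ (χ.relabel t).not, s', ?_⟩, ⟨χ, hχ, ?_⟩, ?_⟩
      · rw [Formula.realize_inf, Formula.realize_not, Formula.realize_relabel]
        exact ⟨hs', hx'⟩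
      · intro s hs
        rw [Formula.realize_inf, Formula.realize_not, Formula.realize_relabel] at hs
        exact hs.2
      · exact hle.2 fun s hs => (Formula.realize_inf.1 hs).1
  let q₀ : Q := ⟨⊤, fun _ => Classical.arbitrary M, by simp⟩
  let seq := Order.sequenceOfCofinals q₀ fun i => ⟨D i, hD i⟩
  have hmono : Monotone seq := Order.sequenceOfCofinals.monotone _ _
  obtain ⟨N, iN, f, hf⟩ := exists_isRich (L := L) M
  haveI : Nonempty N := ⟨f (Classical.arbitrary M)⟩
  obtain ⟨s, hs⟩ := hf.realizes (Y := ℕ) (X := Empty) Empty.elim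
    (Set.range fun k => (seq k).1.relabel Sum.inl) (by
      intro q hq
      have : ∀ φ ∈ q, ∃ k, (seq k).1.relabel Sum.inl = φ := fun φ hφ => hq hφ
      choose! k hk using this
      obtain ⟨s, hs⟩ := (seq (q.sup k)).2
      refine ⟨s, fun φ hφ => ?_⟩
      rw [← hk φ hφ, Formula.realize_relabel, Sum.elim_comp_inl]
      exact hle.1 (hmono (Finset.le_sup hφ)) s hs)
  have hs' : ∀ k, (seq k).1.Realize s := by
    intro k
    have := hs _ ⟨k, rfl⟩
    rwa [Formula.realize_relabel, Sum.elim_comp_inl] at this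
  have hD' : ∀ i : I, ∃ k, seq k ∈ D i := fun i =>
    ⟨_, Order.sequenceOfCofinals.encode_mem q₀ (fun i => ⟨D i, hD i⟩) i⟩
  have hMN : M ≅[L] N := f.elementarilyEquivalent
  have htr : ∀ χ : L.Formula ℕ, (∀ s : ℕ → M, χ.Realize s) → ∀ s : ℕ → N, χ.Realize s :=
    fun χ => forall_realize_of_elementarilyEquivalent hMN χ
  obtain ⟨S, hS⟩ := exists_elementarySubstructure_of_set (L := L) (Set.range s) (by
    intro k φ x hx hex
    choose t ht using hx
    obtain rfl : s ∘ t = x := funext ht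
    obtain ⟨j, m, hm⟩ := hD' (Sum.inl ⟨k, φ, t⟩)
    refine ⟨s m, ⟨m, rfl⟩, ?_⟩
    obtain ⟨θ, hθ⟩ := exists_formula_realize_iff_exists (X := ℕ) (W := Unit)
      (φ.relabel (Fin.snoc (Sum.inl ∘ t) (Sum.inr ()) : _ → ℕ ⊕ Unit))
    have hθ' : ∀ (P : Type) [L.Structure P] [Nonempty P] (s : ℕ → P), θ.Realize s ↔
        ∃ a, φ.Realize (Fin.snoc (s ∘ t) a : _ → P) := by
      intro P _ _ s
      rw [hθ P]
      simp only [Formula.realize_relabel, Fin.comp_snoc, ← Function.comp_assoc,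
        Sum.elim_comp_inl, Sum.elim_inr]
      exact ⟨fun ⟨w, hw⟩ => ⟨_, hw⟩, fun ⟨a, ha⟩ => ⟨fun _ => a, ha⟩⟩
    have := htr ((seq j).1.imp (θ.imp (φ.relabel (Fin.snoc t m : _ → ℕ)))) (by
      intro s
      rw [Formula.realize_imp, Formula.realize_imp, hθ' M, Formula.realize_relabel, Fin.comp_snoc]
      rintro h1 ⟨a, ha⟩
      exact hm s h1 a ha) s
    rw [Formula.realize_imp, Formula.realize_imp, hθ' N, Formula.realize_relabel,
      Fin.comp_snoc] at this
    exact this (hs' j) hex)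
  have hSs : ∀ k, s k ∈ S := fun k => by
    rw [← SetLike.mem_coe, hS]
    exact ⟨k, rfl⟩
  refine ⟨S, inferInstance, ?_, ⟨⟨s 0, hSs 0⟩⟩,
    hMN.trans (S.subtype.elementarilyEquivalent).symm, ?_⟩
  · have : (S : Set N).Countable := hS ▸ Set.countable_range s
    exact this.to_subtype
  · intro x
    have hx : ∀ i, ∃ k, s k = x i := fun i => by
      have := (x i).2
      rwa [← SetLike.mem_coe, hS] at this
    choose t ht using hx
    obtain ⟨j, χ, hχ, hj⟩ := hD' (Sum.inr t)
    refine ⟨χ, hχ, fun h => ?_⟩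
    have h1 := htr ((seq j).1.imp (χ.relabel t).not) (by
      intro s
      rw [Formula.realize_imp, Formula.realize_not, Formula.realize_relabel]
      exact hj s) s
    rw [Formula.realize_imp, Formula.realize_not, Formula.realize_relabel] at h1
    refine h1 (hs' j) ?_
    have h2 := (S.subtype.map_formula χ x).2 h
    rwa [show S.subtype ∘ x = s ∘ t from funext fun i => (ht i).symm] at h2

/-- For each `n`, only finitely many complete types are realized by `n`-tuples of `M`. -/
def FinTypes (L : FirstOrder.Language.{0, 0}) (M : Type) [L.Structure M] : Prop :=
  ∀ n : ℕ, ∃ (F : Type) (_ : Finite F) (t : (Fin n → M) → F),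
    ∀ x y, t x = t y → SameType (L := L) x y

/-- The Ryll–Nardzewski theorem, `ℵ₀`-categoricity implies finitely many types. -/
theorem finTypes_of_categorical [Countable L.Symbols] [L.IsRelational] (M : Type)
    [L.Structure M] [Nonempty M]
    (h : ∀ (N₁ N₂ : Type) [L.Structure N₁] [L.Structure N₂], Countable N₁ → Countable N₂ →
      M ≅[L] N₁ → M ≅[L] N₂ → Nonempty (N₁ ≃[L] N₂)) : FinTypes L M := by
  classical
  intro n
  let A : Set (L.Formula (Fin n)) := {θ | ∀ x y : Fin n → M, θ.Realize x → θ.Realize y →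
    SameType (L := L) x y}
  by_cases hA : FinSat (Empty.elim : Empty → M)
    ((fun θ : L.Formula (Fin n) => (θ.relabel (Sum.inl : _ → Fin n ⊕ Empty)).not) '' A)
  · obtain ⟨N, iN, f, hf⟩ := exists_isRich (L := L) M
    have hMN : M ≅[L] N := f.elementarilyEquivalent
    obtain ⟨b, hb⟩ := hf.realizes _ _ hA
    have hb' : ∀ θ ∈ A, ¬ θ.Realize b := fun θ hθ => by
      have := hb _ ⟨θ, hθ, rfl⟩
      rwa [Formula.realize_not, Formula.realize_relabel, Sum.elim_comp_inl] at this
    obtain ⟨N₁, i₁, hc₁, -, he₁, hom⟩ := exists_countable_omitting M {φ | φ.Realize b} (by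
      rintro θ ⟨x, hx⟩
      by_contra! hcon
      have hθA : θ ∈ A := by
        intro y z hy hz φ
        by_cases hφ : φ.Realize b
        · exact iff_of_true (hcon φ hφ y hy) (hcon φ hφ z hz)
        · exact iff_of_false (hcon φ.not hφ y hy) (hcon φ.not hφ z hz)
      exact hcon θ.not (hb' θ hθA) x hx hx)
    obtain ⟨N₂, i₂, g, b', hc₂, rfl⟩ := exists_countable_elementaryEmbedding (L := L) b
    obtain ⟨e⟩ := h N₂ N₁ hc₂ hc₁ (hMN.trans g.elementarilyEquivalent.symm) he₁
    obtain ⟨φ, hφ, hφ'⟩ := hom (e ∘ b')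
    exact absurd ((StrongHomClass.realize_formula e φ).2 ((g.map_formula φ b').1 hφ)) hφ'
  · simp only [FinSat, not_forall] at hA
    obtain ⟨q, hq, hqA⟩ := hA
    push Not at hqA
    choose t ht ht' using hqA
    refine ⟨q, inferInstance, fun x => ⟨t x, ht x⟩, fun x y hxy => ?_⟩
    obtain ⟨θ, hθ, hθx⟩ := hq (ht x)
    have hxy : t x = t y := congrArg Subtype.val hxy
    have h1 := ht' x
    have h2 := ht' y
    rw [← hθx, Formula.realize_not, not_not, Formula.realize_relabel, Sum.elim_comp_inl] at h1
    rw [← hxy, ← hθx, Formula.realize_not, not_not, Formula.realize_relabel,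
      Sum.elim_comp_inl] at h2
    exact hθ x y h1 h2

end RyllNardzewski

section BackForth

variable {L : FirstOrder.Language.{0, 0}}

theorem nonempty_of_elementarilyEquivalent {M N : Type} [L.Structure M] [L.Structure N]
    (h : M ≅[L] N) [hM : Nonempty M] : Nonempty N := by
  have key : ∀ (P : Type) [L.Structure P],
      Sentence.Realize P (∃' (⊤ : L.BoundedFormula Empty 1)) ↔ Nonempty P := by
    intro P _
    simp [Sentence.Realize, Formula.Realize]
  exact (key N).1 ((elementarilyEquivalent_iff.1 h _).1 ((key M).2 hM))

theorem sameType_elim0 {M N : Type} [L.Structure M] [L.Structure N] (h : M ≅[L] N)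
    (x : Fin 0 → M) (y : Fin 0 → N) : SameType (L := L) x y := by
  intro φ
  have key : ∀ (P : Type) [L.Structure P] (z : Fin 0 → P),
      Sentence.Realize P (φ.relabel (Fin.elim0 : Fin 0 → Empty)) ↔ φ.Realize z := by
    intro P _ z
    rw [Sentence.Realize, Formula.realize_relabel]
    exact iff_of_eq (congrArg _ (Subsingleton.elim _ _))
  rw [← key M, ← key N]
  exact elementarilyEquivalent_iff.1 h _

theorem FinTypes.exists_isolating {M : Type} [L.Structure M] (h : FinTypes L M) (n : ℕ) :
    ∃ Q : Finset (L.Formula (Fin n)), (∀ z : Fin n → M, ∃ θ ∈ Q, θ.Realize z) ∧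
      ∀ θ ∈ Q, ∀ z w : Fin n → M, θ.Realize z → θ.Realize w → SameType (L := L) z w := by
  classical
  obtain ⟨F, _, t, ht⟩ := h n
  haveI := Fintype.ofFinite F
  have hsep : ∀ (x : Fin n → M) (g : F), ∃ χ : L.Formula (Fin n), χ.Realize x ∧
      ∀ z, t z = g → χ.Realize z → SameType (L := L) x z := by
    intro x g
    by_cases hy : ∃ y, t y = g ∧ ¬ SameType (L := L) x y
    · obtain ⟨y, rfl, hy⟩ := hy
      simp only [SameType, not_forall] at hy
      obtain ⟨χ, hχ⟩ := hy
      by_cases hx : χ.Realize x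
      · refine ⟨χ, hx, fun z hz hz' => absurd ?_ hχ⟩
        exact iff_of_true hx ((ht z y hz χ).1 hz')
      · refine ⟨χ.not, hx, fun z hz hz' => absurd ?_ hχ⟩
        exact iff_of_false hx fun h => hz' ((ht z y hz χ).2 h)
    · push Not at hy
      exact ⟨⊤, by simp, fun z hz _ => hy z hz⟩
  choose sep hsep1 hsep2 using hsep
  choose θ hθ using fun x : Fin n → M =>
    exists_formula_forall_mem (Finset.univ.image (sep x))
  have hθ1 : ∀ x, (θ x).Realize x := fun x => (hθ x M x).2 fun φ hφ => by
    obtain ⟨g, -, rfl⟩ := Finset.mem_image.1 hφ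
    exact hsep1 x g
  have hθ2 : ∀ x z, (θ x).Realize z → SameType (L := L) x z := fun x z hz =>
    hsep2 x (t z) z rfl ((hθ x M z).1 hz _ (Finset.mem_image_of_mem _ (Finset.mem_univ _)))
  choose r hr using fun f : Set.range t => f.2
  have hfin : (Set.range fun f => θ (r f)).Finite := Set.finite_range _
  refine ⟨hfin.toFinset, fun z => ⟨θ (r ⟨t z, z, rfl⟩), ?_, ?_⟩, ?_⟩
  · rw [Set.Finite.mem_toFinset]
    exact ⟨_, rfl⟩
  · exact (ht _ _ (hr ⟨t z, z, rfl⟩) _).1 (hθ1 _)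
  · intro χ hχ z w hz hw
    rw [Set.Finite.mem_toFinset] at hχ
    obtain ⟨f, rfl⟩ := hχ
    intro φ
    exact (hθ2 _ z hz φ).symm.trans (hθ2 _ w hw φ)

theorem SameType.symm {M N X : Type} [L.Structure M] [L.Structure N] {u : X → M} {v : X → N}
    (h : SameType (L := L) u v) : SameType (L := L) v u := fun φ => (h φ).symm

theorem FinTypes.exists_isolating_pair {M N : Type} [L.Structure M] [L.Structure N] [Nonempty M]
    [Nonempty N] (h : FinTypes L M) (hMN : M ≅[L] N) (n : ℕ) :
    ∃ Q : Finset (L.Formula (Fin n)), (∀ z : Fin n → M, ∃ θ ∈ Q, θ.Realize z) ∧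
      (∀ z : Fin n → N, ∃ θ ∈ Q, θ.Realize z) ∧
      ∀ θ ∈ Q, ∀ (z : Fin n → M) (w : Fin n → N), θ.Realize z → θ.Realize w →
        SameType (L := L) z w := by
  classical
  obtain ⟨Q, hQ1, hQ2⟩ := h.exists_isolating n
  refine ⟨Q, hQ1, fun z => ?_, fun θ hθ z w hz hw φ => ?_⟩
  · obtain ⟨χ, hχ⟩ := exists_formula_forall_mem (Q.image fun θ => θ.not)
    by_contra! hcon
    obtain ⟨u, hu⟩ := exists_realize_of_elementarilyEquivalent hMN.symm χ ⟨z, (hχ N z).2 (by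
      simpa using hcon)⟩
    obtain ⟨θ, hθ, hθu⟩ := hQ1 u
    exact ((hχ M u).1 hu θ.not (Finset.mem_image_of_mem _ hθ)) hθu
  · have key : ∀ φ : L.Formula (Fin n), φ.Realize z → φ.Realize w := by
      intro φ hφ
      have := forall_realize_of_elementarilyEquivalent hMN (θ.imp φ) (fun u => by
        rw [Formula.realize_imp]
        exact fun hu => (hQ2 θ hθ z u hz hu φ).1 hφ) w
      exact Formula.realize_imp.1 this hw
    exact ⟨key φ, fun h => by_contra fun h' => key φ.not h' h⟩

theorem SameType.exists_snoc {M N : Type} [L.Structure M] [L.Structure N] [Nonempty M]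
    [Nonempty N] {k : ℕ} {x : Fin k → M} {y : Fin k → N} (h : SameType (L := L) x y)
    (θ : L.Formula (Fin (k + 1))) (a : M) (ha : θ.Realize (Fin.snoc x a : _ → M)) :
    ∃ b : N, θ.Realize (Fin.snoc y b : _ → N) := by
  obtain ⟨w, hw⟩ := h.exists_realize
    {θ.relabel (Fin.snoc Sum.inl (Sum.inr ()) : _ → Fin k ⊕ Unit)} (fun _ => a) (by
      intro χ hχ
      rw [Finset.mem_singleton.1 hχ, Formula.realize_relabel, Fin.comp_snoc]
      exact ha)
  have := hw _ (Finset.mem_singleton_self _)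
  rw [Formula.realize_relabel, Fin.comp_snoc] at this
  exact ⟨w (), this⟩

/-- Countable elementarily equivalent structures are isomorphic if they realize finitely many
types in each number of variables. -/
theorem FinTypes.nonempty_equiv [L.IsRelational] {M N : Type} [L.Structure M] [L.Structure N]
    [Countable M] [Countable N] (h : FinTypes L M) (hMN : M ≅[L] N) : Nonempty (M ≃[L] N) := by
  classical
  rcases isEmpty_or_nonempty M with hM | hM
  · have hN : IsEmpty N := by
      by_contra hN
      rw [not_isEmpty_iff] at hN
      exact not_isEmpty_iff.2 (nonempty_of_elementarilyEquivalent hMN.symm) hM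
    exact ⟨⟨Equiv.equivOfIsEmpty M N, fun f => isEmptyElim f, fun {n} r x => by
      rcases n with _ | n
      · simpa [Function.comp_def] using (sameType_elim0 hMN x (Equiv.equivOfIsEmpty M N ∘ x)
          (Relations.formula r fun i => Term.var i)).symm
      · exact isEmptyElim (x 0)⟩⟩
  have hN : Nonempty N := nonempty_of_elementarilyEquivalent hMN
  choose Q hQ1 hQ2 hQ3 using fun n => h.exists_isolating_pair hMN n
  let P := {f : Σ k : ℕ, (Fin k → M) × (Fin k → N) // SameType (L := L) f.2.1 f.2.2}
  let gr : P → Set (M × N) := fun f => Set.range fun i => (f.1.2.1 i, f.1.2.2 i)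
  letI : Preorder P := Preorder.lift gr
  let D : M ⊕ N → Set P := fun z => match z with
    | Sum.inl a => {f | ∃ b, (a, b) ∈ gr f}
    | Sum.inr b => {f | ∃ a, (a, b) ∈ gr f}
  have hsub : ∀ {k : ℕ} (x : Fin k → M) (y : Fin k → N) (a : M) (b : N)
      (h : SameType (L := L) x y)
      (h' : SameType (L := L) (Fin.snoc x a : Fin (k + 1) → M) (Fin.snoc y b : Fin (k + 1) → N)),
      gr ⟨⟨k, x, y⟩, h⟩ ⊆ gr ⟨⟨k + 1, Fin.snoc x a, Fin.snoc y b⟩, h'⟩ ∧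
        (a, b) ∈ gr ⟨⟨k + 1, Fin.snoc x a, Fin.snoc y b⟩, h'⟩ := by
    intro k x y a b h h'
    refine ⟨?_, ⟨Fin.last k, by simp⟩⟩
    rintro _ ⟨i, rfl⟩
    exact ⟨i.castSucc, by simp⟩
  have hD : ∀ z, IsCofinal (D z) := by
    rintro (a | b) ⟨⟨k, x, y⟩, hxy⟩
    · obtain ⟨θ, hθ, ha⟩ := hQ1 _ (Fin.snoc x a : Fin (k + 1) → M)
      obtain ⟨b, hb⟩ := hxy.exists_snoc θ a ha
      have := hsub x y a b hxy (hQ3 _ θ hθ _ _ ha hb)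
      exact ⟨_, ⟨b, this.2⟩, this.1⟩
    · obtain ⟨θ, hθ, hb⟩ := hQ2 _ (Fin.snoc y b : Fin (k + 1) → N)
      obtain ⟨a, ha⟩ := hxy.symm.exists_snoc θ b hb
      have := hsub x y a b hxy (hQ3 _ θ hθ _ _ ha hb)
      exact ⟨_, ⟨a, this.2⟩, this.1⟩
  haveI : Encodable (M ⊕ N) := Encodable.ofCountable _
  let p₀ : P := ⟨⟨0, Fin.elim0, Fin.elim0⟩, sameType_elim0 hMN _ _⟩
  let seq := Order.sequenceOfCofinals p₀ fun i => ⟨D i, hD i⟩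
  have hmono : Monotone seq := Order.sequenceOfCofinals.monotone _ _
  have hD' : ∀ i, ∃ k, seq k ∈ D i := fun i =>
    ⟨_, Order.sequenceOfCofinals.encode_mem p₀ (fun i => ⟨D i, hD i⟩) i⟩
  obtain ⟨e, -⟩ := exists_equiv_of_rel (L := L) (fun a b => ∃ k, (a, b) ∈ gr (seq k)) (fun a => by
    obtain ⟨k, b, hb⟩ := hD' (Sum.inl a)
    exact ⟨b, k, hb⟩) (fun b => by
    obtain ⟨k, a, ha⟩ := hD' (Sum.inr b)
    exact ⟨a, k, ha⟩) (by
    intro l φ s t hst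
    choose k hk using hst
    have hK : ∀ i, (s i, t i) ∈ gr (seq (Finset.univ.sup k)) := fun i =>
      hmono (Finset.le_sup (Finset.mem_univ i)) (hk i)
    choose τ hτ using hK
    have h1 : s = (seq (Finset.univ.sup k)).1.2.1 ∘ τ := funext fun i =>
      (congrArg Prod.fst (hτ i)).symm
    have h2 : t = (seq (Finset.univ.sup k)).1.2.2 ∘ τ := funext fun i =>
      (congrArg Prod.snd (hτ i)).symm
    rw [h1, h2, ← Formula.realize_relabel, ← Formula.realize_relabel]
    exact (seq (Finset.univ.sup k)).2 _)
  exact ⟨e⟩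

end BackForth

section Basic

variable {ι : Type}

/-- Unary predicates on `M` indexed by `ι`. -/
class Colored (ι M : Type) where
  color : ι → Set M

instance instStructure (M : Type) [LinearOrder M] [Colored ι M] : (CLOLang ι).Structure M :=
  CLOStr ι M Colored.color

instance instColoredSet (M : Type) [Colored ι M] (s : Set M) : Colored ι s :=
  ⟨subColor Colored.color s⟩

instance instIsRelational : (CLOLang ι).IsRelational := fun _ => inferInstanceAs (IsEmpty Empty)

instance instCountableSymbols [Countable ι] : Countable (CLOLang ι).Symbols := by
  haveI h1 : ∀ n, Countable (CLORel ι n) := fun n => by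
    let f : CLORel ι n → Option ι := fun r => match r with
      | .lt => none
      | .color i => some i
    refine Function.Injective.countable (f := f) ?_
    rintro r r' h
    cases r <;> cases r' <;> simp_all [f]
  haveI h2 : ∀ n, Countable ((CLOLang ι).Relations n) := h1
  haveI h3 : ∀ n, Countable ((CLOLang ι).Functions n) := fun n => inferInstanceAs (Countable Empty)
  exact inferInstanceAs (Countable ((Σ n, (CLOLang ι).Functions n) ⊕ Σ n, (CLOLang ι).Relations n))

/-- The relation symbol `<`. -/
abbrev ltSymb (ι : Type) : (CLOLang ι).Relations 2 := CLORel.lt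

/-- The relation symbol of the color `i`. -/
abbrev colorSymb (i : ι) : (CLOLang ι).Relations 1 := CLORel.color i

/-- The formula `x < y`. -/
def ltF {X : Type} (x y : X) : (CLOLang ι).Formula X :=
  (ltSymb ι).formula₂ (Term.var x) (Term.var y)

@[simp]
theorem realize_ltF {M X : Type} [LinearOrder M] [Colored ι M] (x y : X) (v : X → M) :
    (ltF x y : (CLOLang ι).Formula X).Realize v ↔ v x < v y := by
  rw [ltF, Formula.realize_rel₂]
  rfl

/-- Structures elementarily equivalent to a colored linear order are colored linear orders. -/
theorem exists_eq_CLOStr {M N : Type} [LinearOrder M] [Colored ι M] [Nonempty M]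
    [iN : (CLOLang ι).Structure N] (h : M ≅[CLOLang ι] N) :
    ∃ (_ : LinearOrder N) (c : ι → Set N), iN = CLOStr ι N c := by
  classical
  haveI : Nonempty N := nonempty_of_elementarilyEquivalent h
  let r : N → N → Prop := fun x y => Structure.RelMap (ltSymb ι) ![x, y]
  have key : ∀ {X : Type} (x y : X) (v : X → N),
      (ltF x y : (CLOLang ι).Formula X).Realize v ↔ r (v x) (v y) := by
    intro X x y v
    rw [ltF, Formula.realize_rel₂]
    rfl
  have hirr : ∀ x, ¬ r x x := by
    intro x
    have := forall_realize_of_elementarilyEquivalent h (ltF () ()).not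
      (by simp) fun _ => x
    rwa [Formula.realize_not, key] at this
  have htrans : ∀ x y z, r x y → r y z → r x z := by
    intro x y z
    have := forall_realize_of_elementarilyEquivalent h
      ((ltF (0 : Fin 3) 1).imp ((ltF (1 : Fin 3) 2).imp (ltF (0 : Fin 3) 2))) (by
        intro u
        simp only [Formula.realize_imp, realize_ltF]
        exact lt_trans) ![x, y, z]
    simp only [Formula.realize_imp, key] at this
    exact this
  have htri : ∀ x y, ¬ r x y → ¬ r y x → x = y := by
    intro x y
    have := forall_realize_of_elementarilyEquivalent h
      ((ltF (0 : Fin 2) 1).not.imp ((ltF (1 : Fin 2) 0).not.imp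
        (Term.equal (Term.var 0) (Term.var 1)))) (by
        intro u
        simp only [Formula.realize_imp, Formula.realize_not, realize_ltF, Formula.realize_equal,
          Term.realize_var, not_lt]
        exact fun h1 h2 => le_antisymm h2 h1) ![x, y]
    simpa [Formula.realize_imp, Formula.realize_not, key] using this
  haveI : IsStrictTotalOrder N r :=
    { irrefl := hirr
      trans := htrans
      trichotomous := htri }
  let o : LinearOrder N := linearOrderOfSTO r
  refine ⟨o, fun i => {x | Structure.RelMap (colorSymb i) ![x]}, ?_⟩
  ext n f x
  · exact isEmptyElim f
  · cases f with
    | lt =>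
      change _ ↔ r (x 0) (x 1)
      have : x = ![x 0, x 1] := by ext i; fin_cases i <;> rfl
      conv_lhs => rw [this]
    | color i =>
      change _ ↔ Structure.RelMap (colorSymb i) ![x 0]
      have : x = ![x 0] := by ext i; fin_cases i; rfl
      conv_lhs => rw [this]

/-- Strictly monotone color-preserving maps are embeddings. -/
def embOfStrictMono {M N : Type} [LinearOrder M] [LinearOrder N] [Colored ι M] [Colored ι N]
    (f : M → N) (hf : StrictMono f)
    (hc : ∀ (i : ι) x, f x ∈ (Colored.color i : Set N) ↔ x ∈ (Colored.color i : Set M)) :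
    M ↪[CLOLang ι] N where
  toFun := f
  inj' := hf.injective
  map_fun' := fun f => isEmptyElim f
  map_rel' := by
    intro n r x
    cases r with
    | lt => exact hf.lt_iff_lt
    | color i => exact hc i _

/-- The inclusion of a subset. -/
def valEmb {M : Type} [LinearOrder M] [Colored ι M] (s : Set M) : s ↪[CLOLang ι] M :=
  embOfStrictMono Subtype.val (fun _ _ h => h) fun _ _ => Iff.rfl

theorem coe_valEmb {M : Type} [LinearOrder M] [Colored ι M] (s : Set M) :
    ⇑(valEmb (ι := ι) s) = Subtype.val := rfl

/-- Color-preserving order isomorphisms are isomorphisms. -/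
def equivOfOrderIso {M N : Type} [LinearOrder M] [LinearOrder N] [Colored ι M] [Colored ι N]
    (e : M ≃o N)
    (hc : ∀ (i : ι) x, e x ∈ (Colored.color i : Set N) ↔ x ∈ (Colored.color i : Set M)) :
    M ≃[CLOLang ι] N where
  toEquiv := e.toEquiv
  map_fun' := fun f => isEmptyElim f
  map_rel' := (embOfStrictMono e e.strictMono hc).map_rel'

theorem lt_iff_of_equiv {M N : Type} [LinearOrder M] [LinearOrder N] [Colored ι M] [Colored ι N]
    (e : M ≃[CLOLang ι] N) (x y : M) : e x < e y ↔ x < y := by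
  exact e.map_rel (ltSymb ι) ![x, y]

theorem color_iff_of_equiv {M N : Type} [LinearOrder M] [LinearOrder N] [Colored ι M]
    [Colored ι N] (e : M ≃[CLOLang ι] N) (i : ι) (x : M) :
    e x ∈ (Colored.color i : Set N) ↔ x ∈ (Colored.color i : Set M) :=
  e.map_rel (colorSymb i) ![x]

end Basic

section Relativization

variable {L : FirstOrder.Language.{0, 0}}

theorem exists_relativization {β : Type} (θ : L.Formula (β ⊕ Unit)) {α : Type} {n : ℕ}
    (φ : L.BoundedFormula α n) :
    ∃ φ' : L.BoundedFormula (β ⊕ α) n, ∀ (M A : Type) [L.Structure M] [L.Structure A]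
      (j : A ↪[L] M) (p : β → M),
      (∀ x, x ∈ Set.range j ↔ θ.Realize (Sum.elim p fun _ => x)) →
      ∀ (v : α → A) (xs : Fin n → A),
        φ'.Realize (Sum.elim p (j ∘ v)) (j ∘ xs) ↔ φ.Realize v xs := by
  have hterm : ∀ {n : ℕ} (t : L.Term (α ⊕ Fin n)) (M A : Type) [L.Structure M] [L.Structure A]
      (j : A ↪[L] M) (p : β → M) (v : α → A) (xs : Fin n → A),
      (t.relabel (Sum.map Sum.inr id : α ⊕ Fin n → (β ⊕ α) ⊕ Fin n)).realize
        (Sum.elim (Sum.elim p (j ∘ v)) (j ∘ xs)) = j (t.realize (Sum.elim v xs)) := by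
    intro n t M A _ _ j p v xs
    rw [Term.realize_relabel, ← HomClass.realize_term]
    congr 1
    ext (x | x) <;> rfl
  induction φ with
  | falsum => exact ⟨⊥, fun M A _ _ j p _ v xs => Iff.rfl⟩
  | equal t₁ t₂ =>
    refine ⟨BoundedFormula.equal (t₁.relabel (Sum.map Sum.inr id))
      (t₂.relabel (Sum.map Sum.inr id)), fun M A _ _ j p _ v xs => ?_⟩
    simp only [BoundedFormula.Realize, hterm]
    exact j.injective.eq_iff
  | rel R ts =>
    refine ⟨BoundedFormula.rel R fun i => (ts i).relabel (Sum.map Sum.inr id),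
      fun M A _ _ j p _ v xs => ?_⟩
    simp only [BoundedFormula.Realize, hterm]
    exact j.map_rel R fun i => (ts i).realize (Sum.elim v xs)
  | imp _ _ ih₁ ih₂ =>
    obtain ⟨φ₁, h₁⟩ := ih₁
    obtain ⟨φ₂, h₂⟩ := ih₂
    refine ⟨φ₁.imp φ₂, fun M A _ _ j p hp v xs => ?_⟩
    simp only [BoundedFormula.Realize, h₁ M A j p hp, h₂ M A j p hp]
  | @all n φ ih =>
    obtain ⟨φ', h'⟩ := ih
    let g : β ⊕ Unit → (β ⊕ α) ⊕ Fin (n + 1) :=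
      Sum.elim (Sum.inl ∘ Sum.inl) fun _ => Sum.inr (Fin.last n)
    let θ' : L.BoundedFormula (β ⊕ α) (n + 1) := BoundedFormula.relabel g θ
    refine ⟨(θ'.imp φ').all, fun M A _ _ j p hp v xs => ?_⟩
    have hθ' : ∀ a : M, θ'.Realize (Sum.elim p (j ∘ v)) (Fin.snoc (j ∘ xs) a) ↔
        a ∈ Set.range j := by
      intro a
      rw [hp a, Formula.Realize]
      refine (BoundedFormula.realize_relabel (n := 0)).trans ?_
      refine iff_of_eq (congrArg₂ _ ?_ (Subsingleton.elim _ _))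
      ext (x | x)
      · rfl
      · simp [g]
    simp only [BoundedFormula.Realize, hθ']
    constructor
    · intro h a
      have := h (j a) ⟨a, rfl⟩
      rwa [← Fin.comp_snoc, h' M A j p hp] at this
    · rintro h _ ⟨a, rfl⟩
      rw [← Fin.comp_snoc, h' M A j p hp]
      exact h a

theorem SameType.restrict {β : Type} (θ : L.Formula (β ⊕ Unit)) {M M' A A' : Type}
    [L.Structure M] [L.Structure M'] [L.Structure A] [L.Structure A'] (j : A ↪[L] M)
    (j' : A' ↪[L] M') {p : β → M} {p' : β → M'}
    (hj : ∀ x, x ∈ Set.range j ↔ θ.Realize (Sum.elim p fun _ => x))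
    (hj' : ∀ x, x ∈ Set.range j' ↔ θ.Realize (Sum.elim p' fun _ => x)) {α : Type}
    {v : α → A} {v' : α → A'}
    (h : SameType (L := L) (Sum.elim p (j ∘ v)) (Sum.elim p' (j' ∘ v'))) :
    SameType (L := L) v v' := by
  intro φ
  obtain ⟨φ', h'⟩ := exists_relativization θ φ
  rw [Formula.Realize, Formula.Realize, ← h' M A j p hj, ← h' M' A' j' p' hj']
  have := h φ'
  rw [Formula.Realize, Formula.Realize] at this
  convert this

theorem SameType.elementarilyEquivalent {β : Type} (θ : L.Formula (β ⊕ Unit)) {M M' A A' : Type}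
    [L.Structure M] [L.Structure M'] [L.Structure A] [L.Structure A'] (j : A ↪[L] M)
    (j' : A' ↪[L] M') {p : β → M} {p' : β → M'}
    (hj : ∀ x, x ∈ Set.range j ↔ θ.Realize (Sum.elim p fun _ => x))
    (hj' : ∀ x, x ∈ Set.range j' ↔ θ.Realize (Sum.elim p' fun _ => x))
    (h : SameType (L := L) p p') : A ≅[L] A' := by
  refine elementarilyEquivalent_iff.2 fun φ => ?_
  refine SameType.restrict θ j j' hj hj' (v := default) (v' := default) ?_ φ
  have key : ∀ (P : Type) (p : β → P) (w : Empty → P),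
      Sum.elim p w = p ∘ (Sum.elim id Empty.elim) := by
    intro P p w
    ext (x | x)
    · rfl
    · exact x.elim
  intro ψ
  rw [key M p, key M' p', ← Formula.realize_relabel, ← Formula.realize_relabel]
  exact h _

end Relativization

section Sequences

/-- In a countable linear order with a finite coloring of pairs, from any point there is a cofinal
monotone sequence along which all consecutive pairs but the first have the same color. -/
theorem exists_cofinal_seq {N F : Type} [LinearOrder N] [Countable N] [Finite F] (f : N → N → F)
    (a : N) : ∃ s : ℕ → N, s 0 = a ∧ Monotone s ∧ (∀ x, ∃ k, x ≤ s k) ∧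
      ∀ k, f (s (k + 1)) (s (k + 2)) = f (s 1) (s 2) := by
  classical
  haveI : Nonempty N := ⟨a⟩
  let U : Ultrafilter N := Ultrafilter.of Filter.atTop
  have hU : ∀ b : N, ∀ᶠ x in U, b ≤ x := fun b =>
    Ultrafilter.of_le _ (Filter.eventually_ge_atTop b)
  have hlim : ∀ g : N → F, ∃ τ, ∀ᶠ x in U, g x = τ := by
    intro g
    obtain ⟨τ, hτ⟩ := Ultrafilter.eq_pure_of_finite (U.map g)
    refine ⟨τ, ?_⟩
    have : {τ} ∈ U.map g := by rw [hτ]; exact Set.mem_singleton τ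
    exact this
  choose t ht using fun b => hlim (f b)
  obtain ⟨τ, hτ⟩ := hlim t
  obtain ⟨e, he⟩ := exists_surjective_nat N
  have hstep : ∀ (b : N) (k : ℕ), ∃ y, b ≤ y ∧ e k ≤ y ∧ t y = τ ∧ f b y = t b := fun b k =>
    (((hU b).and ((hU (e k)).and (hτ.and (ht b)))).exists)
  choose nx h1 h2 h3 h4 using hstep
  let s : ℕ → N := fun k => Nat.rec a (fun k b => nx b k) k
  have hs : ∀ k, s (k + 1) = nx (s k) k := fun k => rfl
  have hτs : ∀ k, f (s (k + 1)) (s (k + 2)) = τ := fun k => by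
    rw [hs (k + 1), h4, hs k, h3]
  refine ⟨s, rfl, monotone_nat_of_le_succ fun k => hs k ▸ h1 _ _, fun x => ?_, fun k => ?_⟩
  · obtain ⟨k, rfl⟩ := he x
    exact ⟨k + 1, hs k ▸ h2 _ _⟩
  · exact (hτs k).trans (hτs 0).symm

/-- Every monotone finite sequence in a countable linear order with a finite coloring of pairs
extends to a monotone, cofinal and coinitial `ℤ`-sequence whose consecutive pairs have colors that
are constant outside a fixed window. -/
theorem exists_int_seq {N F : Type} [LinearOrder N] [Countable N] [Finite F] (f : N → N → F)
    (n : ℕ) (a : ℕ → N) (ha : Monotone a) :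
    ∃ s : ℤ → N, (∀ k : ℕ, k ≤ n → s k = a k) ∧ Monotone s ∧ (∀ x, ∃ k, x ≤ s k) ∧
      (∀ x, ∃ k, s k ≤ x) ∧
      (∀ k : ℤ, n + 1 ≤ k → f (s k) (s (k + 1)) = f (s (n + 1)) (s (n + 2))) ∧
      ∀ k : ℤ, k ≤ -2 → f (s k) (s (k + 1)) = f (s (-2)) (s (-1)) := by
  obtain ⟨r, hr0, hr, hrc, hrf⟩ := exists_cofinal_seq f (a n)
  haveI : Countable Nᵒᵈ := inferInstanceAs (Countable N)
  obtain ⟨l, hl0, hl, hlc, hlf⟩ := exists_cofinal_seq (N := Nᵒᵈ)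
    (fun x y => f (OrderDual.ofDual y) (OrderDual.ofDual x)) (OrderDual.toDual (a 0))
  let R : ℕ → N := fun k => if k ≤ n then a k else r (k - n)
  let s : ℤ → N := fun k => match k with
    | Int.ofNat k => R k
    | Int.negSucc k => OrderDual.ofDual (l (k + 1))
  have hR : ∀ d, R (n + d) = r d := by
    intro d
    rcases d with _ | d
    · simp [R, hr0]
    · simp [R]
  have hsR : ∀ k : ℕ, s k = R k := fun k => rfl
  have hsl : ∀ k : ℕ, s (-k) = OrderDual.ofDual (l k) := by
    intro k
    rcases k with _ | k
    · simp only [Nat.cast_zero, neg_zero]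
      rw [hl0]
      exact (hsR 0).trans (by simp [R])
    · rfl
  have hRm : Monotone R := by
    refine monotone_nat_of_le_succ fun k => ?_
    rcases lt_or_ge k n with h | h
    · simp only [R, h.le, Nat.succ_le_of_lt h, if_true]
      exact ha (Nat.le_succ k)
    · obtain ⟨d, rfl⟩ := Nat.exists_eq_add_of_le h
      rw [add_assoc, hR, hR]
      exact hr (Nat.le_succ d)
  refine ⟨s, fun k hk => ?_, ?_, fun x => ?_, fun x => ?_, fun k hk => ?_, fun k hk => ?_⟩
  · rw [hsR]
    simp [R, hk]
  · refine monotone_int_of_le_succ fun k => ?_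
    rcases le_or_gt 0 k with h | h
    · obtain ⟨k, rfl⟩ := Int.eq_ofNat_of_zero_le h
      exact hRm (Nat.le_succ k)
    · obtain ⟨m, hm⟩ := Int.eq_ofNat_of_zero_le (a := -k - 1) (by omega)
      have e1 : k = -((m + 1 : ℕ) : ℤ) := by push_cast; omega
      have e2 : k + 1 = -(m : ℤ) := by omega
      rw [e2, e1, hsl, hsl]
      exact hl (Nat.le_succ m)
  · obtain ⟨k, hk⟩ := hrc x
    refine ⟨((n + k : ℕ) : ℤ), ?_⟩
    rwa [hsR, hR]
  · obtain ⟨k, hk⟩ := hlc (OrderDual.toDual x)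
    exact ⟨-k, by rw [hsl]; exact hk⟩
  · obtain ⟨d, rfl⟩ := Int.le.dest hk
    have e1 : (n + 1 + d : ℤ) = ((n + (d + 1) : ℕ) : ℤ) := by push_cast; ring
    have e2 : (n + 1 + d + 1 : ℤ) = ((n + (d + 2) : ℕ) : ℤ) := by push_cast; ring
    have e3 : (n + 1 : ℤ) = ((n + 1 : ℕ) : ℤ) := by push_cast; ring
    have e4 : (n + 2 : ℤ) = ((n + 2 : ℕ) : ℤ) := by push_cast; ring
    rw [e2, e1, e3, e4, hsR, hsR, hsR, hsR, hR, hR, hR, hR]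
    exact hrf d
  · obtain ⟨m, hm⟩ := Int.eq_ofNat_of_zero_le (a := -k - 2) (by omega)
    have e1 : k = -((m + 2 : ℕ) : ℤ) := by push_cast; omega
    have e2 : k + 1 = -((m + 1 : ℕ) : ℤ) := by push_cast; omega
    have e3 : (-2 : ℤ) = -((2 : ℕ) : ℤ) := rfl
    have e4 : (-1 : ℤ) = -((1 : ℕ) : ℤ) := rfl
    rw [e2, e1, e3, e4, hsl, hsl, hsl, hsl]
    exact hlf m

theorem exists_mem_Icc_int_seq {N : Type} [LinearOrder N] {s : ℤ → N} (hs : Monotone s)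
    (hc : ∀ x, ∃ k, x ≤ s k) (hi : ∀ x, ∃ k, s k ≤ x) (x : N) :
    ∃ k, x ∈ Set.Icc (s k) (s (k + 1)) := by
  classical
  obtain ⟨i, hi⟩ := hi x
  obtain ⟨j, hj⟩ := hc x
  have hex : ∃ m : ℕ, x ≤ s (i + m + 1) := by
    refine ⟨(j - i).toNat, hj.trans (hs ?_)⟩
    have := Int.self_le_toNat (j - i)
    omega
  rcases hm : Nat.find hex with _ | m
  · have := Nat.find_spec hex
    rw [hm] at this
    exact ⟨i, hi, by simpa using this⟩
  · have h1 := Nat.find_spec hex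
    have h2 := Nat.find_min hex (m := m) (by omega)
    rw [hm] at h1
    refine ⟨i + m + 1, (not_le.1 h2).le, ?_⟩
    push_cast at h1
    rwa [← add_assoc] at h1

theorem glue_le {N N' : Type} [LinearOrder N] [LinearOrder N'] {s : ℤ → N} {s' : ℤ → N'}
    (hs : Monotone s) (hs' : Monotone s')
    (e : ∀ k, Set.Icc (s k) (s (k + 1)) ≃o Set.Icc (s' k) (s' (k + 1)))
    {i j : ℤ} (x : Set.Icc (s i) (s (i + 1))) (y : Set.Icc (s j) (s (j + 1)))
    (hxy : (x : N) ≤ y) : (e i x : N') ≤ e j y := by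
  have hbot : ∀ k (z : Set.Icc (s k) (s (k + 1))), (z : N) ≤ s k → (e k z : N') ≤ s' k := by
    intro k z hz
    have h := (e k).symm_apply_apply z
    let b : Set.Icc (s' k) (s' (k + 1)) := ⟨s' k, le_rfl, hs' (by omega)⟩
    have : z ≤ (e k).symm b := hz.trans ((e k).symm b).2.1
    exact (e k).le_symm_apply.1 this
  have htop : ∀ k (z : Set.Icc (s k) (s (k + 1))), s (k + 1) ≤ (z : N) →
      s' (k + 1) ≤ (e k z : N') := by
    intro k z hz
    let b : Set.Icc (s' k) (s' (k + 1)) := ⟨s' (k + 1), hs' (by omega), le_rfl⟩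
    have : (e k).symm b ≤ z := ((e k).symm b).2.2.trans hz
    exact (e k).symm_apply_le.1 this
  have hconst : ∀ (m : ℕ) (k : ℤ), s (k + m) ≤ s k → s' (k + m) ≤ s' k := by
    intro m
    induction m with
    | zero => intro k _; simp
    | succ m ih =>
      intro k h
      push_cast at h ⊢
      have h1 : s (k + m) ≤ s k := (hs (by omega)).trans h
      refine le_trans ?_ (ih k h1)
      have h2 : s (k + m + 1) ≤ s (k + m) := by
        rw [add_assoc]
        exact h.trans (hs (by omega))
      let z : Set.Icc (s (k + m)) (s (k + m + 1)) := ⟨s (k + m), le_rfl, hs (by omega)⟩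
      rw [← add_assoc]
      exact (htop _ z h2).trans (hbot _ z le_rfl)
  rcases lt_trichotomy i j with h | rfl | h
  · exact (e i x).2.2.trans ((hs' (by omega)).trans (e j y).2.1)
  · exact (e i).monotone hxy
  · obtain ⟨m, hm⟩ := Int.eq_ofNat_of_zero_le (a := i - (j + 1)) (by omega)
    obtain rfl : i = j + 1 + m := by omega
    have h1 : s (j + 1) ≤ s (j + 1 + m) := hs (by omega)
    have h2 : (y : N) ≤ s (j + 1) := y.2.2
    have h3 : s (j + 1 + m) ≤ x := x.2.1
    exact (hbot _ x (hxy.trans (h2.trans h1))).trans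
      ((hconst m _ (h3.trans (hxy.trans h2))).trans (htop _ y (h1.trans (h3.trans hxy))))

/-- Gluing isomorphisms between consecutive intervals. -/
theorem exists_equiv_of_int_seq {ι N N' : Type} [LinearOrder N] [LinearOrder N'] [Colored ι N]
    [Colored ι N'] {s : ℤ → N} {s' : ℤ → N'}
    (hs : Monotone s) (hc : ∀ x, ∃ k, x ≤ s k) (hi : ∀ x, ∃ k, s k ≤ x)
    (hs' : Monotone s') (hc' : ∀ x, ∃ k, x ≤ s' k) (hi' : ∀ x, ∃ k, s' k ≤ x)
    (e : ∀ k, Set.Icc (s k) (s (k + 1)) ≃[CLOLang ι] Set.Icc (s' k) (s' (k + 1))) :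
    ∃ E : N ≃[CLOLang ι] N', ∀ k, E (s k) = s' k := by
  let o : ∀ k, Set.Icc (s k) (s (k + 1)) ≃o Set.Icc (s' k) (s' (k + 1)) := fun k =>
    { (e k).toEquiv with
      map_rel_iff' := fun {x y} => by
        have := lt_iff_of_equiv (e k) y x
        rw [← not_lt, ← not_lt]
        exact not_congr this }
  have ho : ∀ k x, o k x = e k x := fun k x => rfl
  choose i hx using exists_mem_Icc_int_seq hs hc hi
  choose i' hx' using exists_mem_Icc_int_seq hs' hc' hi'
  let E : N → N' := fun x => o (i x) ⟨x, hx x⟩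
  let E' : N' → N := fun y => (o (i' y)).symm ⟨y, hx' y⟩
  have hEE' : ∀ y, E (E' y) = y := by
    intro y
    have key : ∀ z : Set.Icc (s' (i' y)) (s' (i' y + 1)), z = ⟨y, hx' y⟩ → (z : N') = y := by
      rintro _ rfl; rfl
    have h0 := key _ ((o (i' y)).apply_symm_apply ⟨y, hx' y⟩)
    refine le_antisymm (le_of_le_of_eq ?_ h0) (le_of_eq_of_le h0.symm ?_)
    · exact glue_le hs hs' o _ _ le_rfl
    · exact glue_le hs hs' o _ _ le_rfl
  have hE'E : ∀ x, E' (E x) = x := by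
    intro x
    have key : ∀ z : Set.Icc (s (i x)) (s (i x + 1)), z = ⟨x, hx x⟩ → (z : N) = x := by
      rintro _ rfl; rfl
    have h0 := key _ ((o (i x)).symm_apply_apply ⟨x, hx x⟩)
    refine le_antisymm (le_of_le_of_eq ?_ h0) (le_of_eq_of_le h0.symm ?_)
    · exact glue_le hs' hs (fun k => (o k).symm) _ _ le_rfl
    · exact glue_le hs' hs (fun k => (o k).symm) _ _ le_rfl
  let O : N ≃o N' :=
    { toFun := E
      invFun := E'
      left_inv := hE'E
      right_inv := hEE'
      map_rel_iff' := fun {x y} => by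
        refine ⟨fun h => ?_, fun h => glue_le hs hs' o _ _ h⟩
        have : E' (E x) ≤ E' (E y) := glue_le hs' hs (fun k => (o k).symm) _ _ h
        rwa [hE'E, hE'E] at this }
  refine ⟨equivOfOrderIso O fun c x => ?_, fun k => ?_⟩
  · exact color_iff_of_equiv (e (i x)) c ⟨x, hx x⟩
  · have hk : s k ∈ Set.Icc (s k) (s (k + 1)) := ⟨le_rfl, hs (by omega)⟩
    have h1 : (o k ⟨s k, hk⟩ : N') = s' k := by
      refine le_antisymm ?_ (o k ⟨s k, hk⟩).2.1
      let b : Set.Icc (s' k) (s' (k + 1)) := ⟨s' k, le_rfl, hs' (by omega)⟩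
      have : (⟨s k, hk⟩ : Set.Icc (s k) (s (k + 1))) ≤ (o k).symm b := ((o k).symm b).2.1
      exact (o k).le_symm_apply.1 this
    refine le_antisymm (le_of_le_of_eq ?_ h1) (le_of_eq_of_le h1.symm ?_)
    · exact glue_le hs hs' o _ _ le_rfl
    · exact glue_le hs hs' o _ _ le_rfl

end Sequences

section Codes

variable {ι : Type}

/-- The theories of all nonempty closed intervals of `N` belong to `𝓛`. -/
def IntervalsIn (𝓛 : Set (CLOLang ι).Theory) (N : Type) [LinearOrder N] [Colored ι N] : Prop :=
  ∀ a b : N, a ≤ b → (CLOLang ι).completeTheory (Set.Icc a b) ∈ 𝓛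

theorem window_le (n : ℕ) : (-2 : ℤ) ≤ n + 1 := by omega

/-- The function `c` records the theories of the intervals of a monotone, cofinal and coinitial
`ℤ`-sequence extending `a 0, …, a n`. -/
def HasCode (𝓛 : Set (CLOLang ι).Theory) (n : ℕ) {N : Type} [LinearOrder N] [Colored ι N]
    (a : ℕ → N) (c : Set.Icc (-2 : ℤ) (n + 1) → 𝓛) : Prop :=
  ∃ s : ℤ → N, (∀ k : ℕ, k ≤ n → s k = a k) ∧ Monotone s ∧ (∀ x, ∃ k, x ≤ s k) ∧
    (∀ x, ∃ k, s k ≤ x) ∧ ∀ k, (CLOLang ι).completeTheory (Set.Icc (s k) (s (k + 1))) =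
      (c (Set.projIcc _ _ (window_le n) k)).1

theorem exists_hasCode {𝓛 : Set (CLOLang ι).Theory} (h𝓛 : 𝓛.Finite) (n : ℕ) {N : Type}
    [LinearOrder N] [Colored ι N] [Countable N] (hN : IntervalsIn 𝓛 N) (a : ℕ → N)
    (ha : Monotone a) : ∃ c, HasCode 𝓛 n a c := by
  classical
  haveI := h𝓛.to_subtype
  let f : N → N → 𝓛 := fun x y =>
    if h : x ≤ y then ⟨_, hN x y h⟩ else ⟨_, hN (a 0) (a 0) le_rfl⟩
  have hf : ∀ x y, x ≤ y → (f x y).1 = (CLOLang ι).completeTheory (Set.Icc x y) := by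
    intro x y h
    simp [f, h]
  obtain ⟨s, h1, h2, h3, h4, h5, h6⟩ := exists_int_seq f n a ha
  refine ⟨fun k => f (s k) (s (k + 1)), s, h1, h2, h3, h4, fun k => ?_⟩
  rw [← hf _ _ (h2 (by omega))]
  congr 1
  rcases le_total k (-2) with h | h
  · rw [Set.projIcc_of_le_left _ h, h6 k h]
    norm_num
  rcases le_total (n + 1 : ℤ) k with h' | h'
  · rw [Set.projIcc_of_right_le _ h', h5 k h']
    ring_nf
  · rw [Set.projIcc_of_mem _ ⟨h, h'⟩]

theorem HasCode.exists_equiv {𝓛 : Set (CLOLang ι).Theory}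
    (hcat : ∀ T ∈ 𝓛, Aleph0CatTheory ι T) {n : ℕ} {N N' : Type} [LinearOrder N] [Colored ι N]
    [Countable N] [LinearOrder N'] [Colored ι N'] [Countable N'] {a : ℕ → N} {a' : ℕ → N'}
    {c : Set.Icc (-2 : ℤ) (n + 1) → 𝓛} (h : HasCode 𝓛 n a c) (h' : HasCode 𝓛 n a' c) :
    ∃ E : N ≃[CLOLang ι] N', ∀ k ≤ n, E (a k) = a' k := by
  obtain ⟨s, h1, h2, h3, h4, h5⟩ := h
  obtain ⟨s', h1', h2', h3', h4', h5'⟩ := h'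
  have he : ∀ k, Nonempty
      (Set.Icc (s k) (s (k + 1)) ≃[CLOLang ι] Set.Icc (s' k) (s' (k + 1))) := fun k =>
    hcat _ (c (Set.projIcc _ _ (window_le n) k)).2 _ _ _ _ _ _ inferInstance inferInstance
      (h5 k) (h5' k)
  obtain ⟨E, hE⟩ := exists_equiv_of_int_seq h2 h3 h4 h2' h3' h4' fun k => (he k).some
  exact ⟨E, fun k hk => by rw [← h1 k hk, ← h1' k hk, hE]⟩

theorem sameType_of_equiv {L : FirstOrder.Language.{0, 0}} {M N X : Type} [L.Structure M]
    [L.Structure N] (e : M ≃[L] N) (x : X → M) : SameType (L := L) x (e ∘ x) :=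
  fun φ => (StrongHomClass.realize_formula e φ).symm

theorem elementarilyEquivalent_of_equiv {L : FirstOrder.Language.{0, 0}} {M N : Type}
    [L.Structure M] [L.Structure N] (e : M ≃[L] N) : M ≅[L] N :=
  e.toElementaryEmbedding.elementarilyEquivalent

theorem finTypes_of_intervalsIn {𝓛 : Set (CLOLang ι).Theory} (h𝓛 : 𝓛.Finite)
    (hcat : ∀ T ∈ 𝓛, Aleph0CatTheory ι T) {N : Type} [LinearOrder N] [Colored ι N]
    [Countable N] (hN : IntervalsIn 𝓛 N) : FinTypes (CLOLang ι) N := by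
  haveI := h𝓛.to_subtype
  intro n
  rcases n with _ | n
  · exact ⟨Unit, inferInstance, fun _ => (), fun x y _ => sameType_elim0 rfl x y⟩
  let A : (Fin (n + 1) → N) → ℕ → N := fun b k =>
    (b ∘ Tuple.sort b) ⟨min k n, by omega⟩
  have hA : ∀ b, Monotone (A b) := fun b k l hkl =>
    Tuple.monotone_sort b (Fin.mk_le_mk.2 (min_le_min_right n hkl))
  choose c hc using fun b => exists_hasCode h𝓛 n hN (A b) (hA b)
  refine ⟨Equiv.Perm (Fin (n + 1)) × (Set.Icc (-2 : ℤ) (n + 1) → 𝓛), inferInstance,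
    fun b => (Tuple.sort b, c b), fun x y hxy => ?_⟩
  obtain ⟨hσ, hc'⟩ := Prod.mk.inj hxy
  obtain ⟨E, hE⟩ := (hc x).exists_equiv hcat (hc' ▸ hc y)
  have : E ∘ x = y := by
    funext i
    obtain ⟨j, rfl⟩ := (Tuple.sort x).surjective i
    have h1 := hE j (Nat.lt_succ_iff.1 j.2)
    have h2 : (⟨min (j : ℕ) n, by omega⟩ : Fin (n + 1)) = j :=
      Fin.ext (min_eq_left (Nat.lt_succ_iff.1 j.2))
    simp only [A, h2, Function.comp_apply] at h1
    rw [Function.comp_apply, h1, hσ]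
  exact this ▸ sameType_of_equiv E x

theorem finite_theories_of_intervalsIn {𝓛 : Set (CLOLang ι).Theory} (h𝓛 : 𝓛.Finite)
    (hcat : ∀ T ∈ 𝓛, Aleph0CatTheory ι T) :
    {T : (CLOLang ι).Theory | ∃ (N : Type) (_ : LinearOrder N) (_ : Colored ι N),
      Countable N ∧ IntervalsIn 𝓛 N ∧ T = (CLOLang ι).completeTheory N}.Finite := by
  classical
  haveI := h𝓛.to_subtype
  let C := Option (Set.Icc (-2 : ℤ) ((0 : ℕ) + 1) → 𝓛)
  have : ∀ T : {T : (CLOLang ι).Theory | ∃ (N : Type) (_ : LinearOrder N) (_ : Colored ι N),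
      Countable N ∧ IntervalsIn 𝓛 N ∧ T = (CLOLang ι).completeTheory N}, ∃ c : C,
      ∃ (N : Type) (_ : LinearOrder N) (_ : Colored ι N), Countable N ∧
        T.1 = (CLOLang ι).completeTheory N ∧
        match c with
        | none => IsEmpty N
        | some c => ∃ a : ℕ → N, HasCode 𝓛 0 a c := by
    rintro ⟨T, N, i, j, hc, hN, hT⟩
    rcases isEmpty_or_nonempty N with h | ⟨⟨x⟩⟩
    · exact ⟨none, N, i, j, hc, hT, h⟩
    · obtain ⟨c, h⟩ := exists_hasCode h𝓛 0 hN (fun _ => x) monotone_const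
      exact ⟨some c, N, i, j, hc, hT, _, h⟩
  choose c hc using this
  refine Set.finite_coe_iff.1 (Finite.of_injective c fun T T' h => Subtype.ext ?_)
  have h₁ := hc T
  have h₂ := hc T'
  rw [← h] at h₂
  cases hT : c T with
  | none =>
    rw [hT] at h₁ h₂
    obtain ⟨N, i, j, _, e, hN⟩ := h₁
    obtain ⟨N', i', j', _, e', hN'⟩ := h₂
    rw [e, e']
    exact elementarilyEquivalent_of_equiv
      (equivOfOrderIso (OrderIso.ofIsEmpty N N') fun _ x => hN.elim x)
  | some d =>
    rw [hT] at h₁ h₂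
    obtain ⟨N, i, j, _, e, a, ha⟩ := h₁
    obtain ⟨N', i', j', _, e', a', ha'⟩ := h₂
    rw [e, e']
    exact elementarilyEquivalent_of_equiv (ha.exists_equiv hcat ha').choose

end Codes

section Categorical

theorem sameType_elementaryEmbedding {L : FirstOrder.Language.{0, 0}} {M N X : Type}
    [L.Structure M] [L.Structure N] (f : M ↪ₑ[L] N) (x : X → M) :
    SameType (L := L) x (f ∘ x) :=
  fun φ => (f.map_formula φ x).symm

theorem SameType.trans {L : FirstOrder.Language.{0, 0}} {M N P X : Type} [L.Structure M]
    [L.Structure N] [L.Structure P] {u : X → M} {v : X → N} {w : X → P}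
    (h : SameType (L := L) u v) (h' : SameType (L := L) v w) : SameType (L := L) u w :=
  fun φ => (h φ).trans (h' φ)

theorem FinTypes.of_elementaryEmbedding {L : FirstOrder.Language.{0, 0}} {M N : Type}
    [L.Structure M] [L.Structure N] (h : FinTypes L N) (f : M ↪ₑ[L] N) : FinTypes L M := by
  intro n
  obtain ⟨F, hF, t, ht⟩ := h n
  exact ⟨F, hF, fun x => t (f ∘ x), fun x y hxy =>
    ((sameType_elementaryEmbedding f x).trans (ht _ _ hxy)).trans
      (sameType_elementaryEmbedding f y).symm⟩

variable {ι : Type} [Countable ι]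

theorem aleph0CatTheory_of_finTypes {M : Type} [LinearOrder M] [Colored ι M]
    (h : FinTypes (CLOLang ι) M) : Aleph0CatTheory ι ((CLOLang ι).completeTheory M) := by
  intro N₁ N₂ i₁ i₂ c₁ c₂ hc₁ hc₂ h₁ h₂
  letI := CLOStr ι N₁ c₁
  letI := CLOStr ι N₂ c₂
  obtain ⟨K, _, f, -, hK, -⟩ :=
    exists_countable_elementaryEmbedding (L := CLOLang ι) (M := M) Fin.elim0
  have hfin := h.of_elementaryEmbedding f
  have hKM : K ≅[CLOLang ι] M := f.elementarilyEquivalent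
  obtain ⟨e₁⟩ := hfin.nonempty_equiv (hKM.trans h₁.symm)
  obtain ⟨e₂⟩ := hfin.nonempty_equiv (hKM.trans h₂.symm)
  exact ⟨e₂.comp e₁.symm⟩

theorem finTypes_of_aleph0CatTheory {M : Type} [LinearOrder M] [Colored ι M] [Nonempty M]
    (h : Aleph0CatTheory ι ((CLOLang ι).completeTheory M)) : FinTypes (CLOLang ι) M := by
  refine finTypes_of_categorical M fun N₁ N₂ s₁ s₂ hc₁ hc₂ h₁ h₂ => ?_
  obtain ⟨i₁, c₁, rfl⟩ := exists_eq_CLOStr h₁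
  obtain ⟨i₂, c₂, rfl⟩ := exists_eq_CLOStr h₂
  exact h N₁ N₂ i₁ i₂ c₁ c₂ hc₁ hc₂ (Eq.symm h₁) (Eq.symm h₂)

end Categorical

section Intervals

variable {ι : Type}

/-- The formula `p 0 ≤ x ≤ p 1`. -/
def iccF : (CLOLang ι).Formula (Fin 2 ⊕ Unit) :=
  ∼(ltF (Sum.inr ()) (Sum.inl 0)) ⊓ ∼(ltF (Sum.inl 1) (Sum.inr ()))

theorem realize_iccF {M : Type} [LinearOrder M] [Colored ι M] (a b x : M) :
    (iccF : (CLOLang ι).Formula (Fin 2 ⊕ Unit)).Realize (Sum.elim ![a, b] fun _ => x) ↔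
      x ∈ Set.Icc a b := by
  simp [iccF]

theorem mem_range_valEmb {M : Type} [LinearOrder M] [Colored ι M] (s : Set M) (x : M) :
    x ∈ Set.range (valEmb (ι := ι) s) ↔ x ∈ s := by
  rw [coe_valEmb, Subtype.range_coe]

theorem icc_elementarilyEquivalent {M N : Type} [LinearOrder M] [Colored ι M]
    [LinearOrder N] [Colored ι N] {a b : M} {a' b' : N}
    (h : SameType (L := CLOLang ι) ![a, b] ![a', b']) :
    Set.Icc a b ≅[CLOLang ι] Set.Icc a' b' :=
  h.elementarilyEquivalent iccF (valEmb _) (valEmb _)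
    (fun x => by rw [mem_range_valEmb, realize_iccF])
    (fun x => by rw [mem_range_valEmb, realize_iccF])

/-- The theories of the nonempty closed intervals of `P`. -/
def intervalTheories (ι P : Type) [LinearOrder P] [Colored ι P] : Set (CLOLang ι).Theory :=
  {T | ∃ a b : P, a ≤ b ∧ T = (CLOLang ι).completeTheory (Set.Icc a b)}

theorem intervalTheories_finite {P : Type} [LinearOrder P] [Colored ι P]
    (h : FinTypes (CLOLang ι) P) : (intervalTheories ι P).Finite := by
  obtain ⟨F, hF, t, ht⟩ := h 2
  choose a b hab hT using fun T : intervalTheories ι P => T.2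
  refine Set.finite_coe_iff.1 (Finite.of_injective (fun T => t ![a T, b T]) fun T T' hTT' => ?_)
  refine Subtype.ext ?_
  rw [hT T, hT T']
  exact icc_elementarilyEquivalent (ht _ _ hTT')

theorem finTypes_icc {P : Type} [LinearOrder P] [Colored ι P] (h : FinTypes (CLOLang ι) P)
    (a b : P) : FinTypes (CLOLang ι) (Set.Icc a b) := by
  intro n
  obtain ⟨F, hF, t, ht⟩ := h (2 + n)
  refine ⟨F, hF, fun x => t (Fin.append ![a, b] fun i => (x i : P)), fun x y hxy => ?_⟩
  refine SameType.restrict iccF (valEmb _) (valEmb _) (p := ![a, b]) (p' := ![a, b])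
    (fun x => by rw [mem_range_valEmb, realize_iccF])
    (fun x => by rw [mem_range_valEmb, realize_iccF]) fun φ => ?_
  have key : ∀ z : Fin n → Set.Icc a b, φ.Realize (Sum.elim ![a, b] (valEmb (ι := ι) _ ∘ z)) ↔
      (φ.relabel finSumFinEquiv).Realize (Fin.append ![a, b] fun i => (z i : P)) := by
    intro z
    rw [Formula.realize_relabel]
    refine iff_of_eq (congrArg _ (funext fun i => ?_))
    rcases i with i | i <;> simp [coe_valEmb]
  rw [key, key]
  exact ht _ _ hxy _

theorem aleph0CatTheory_of_mem_intervalTheories [Countable ι] {P : Type} [LinearOrder P]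
    [Colored ι P] (h : FinTypes (CLOLang ι) P) :
    ∀ T ∈ intervalTheories ι P, Aleph0CatTheory ι T := by
  rintro _ ⟨a, b, -, rfl⟩
  exact aleph0CatTheory_of_finTypes (finTypes_icc h a b)

end Intervals

section Saturated

/-- A model realizing all finitely satisfiable countable sets of formulas over finitely many
parameters, and whose finite tuples of the same type are conjugate. -/
structure IsSaturatedHomogeneous (L : FirstOrder.Language.{0, 0}) (S : Type) [L.Structure S] :
    Prop where
  exists_realize : ∀ (m : ℕ) (Y : Type) [Countable Y] (a : Fin m → S)
    (p : Set (L.Formula (Y ⊕ Fin m))), FinSat a p →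
      ∃ y : Y → S, ∀ φ ∈ p, φ.Realize (Sum.elim y a)
  exists_equiv : ∀ (m : ℕ) (a b : Fin m → S), SameType (L := L) a b →
    ∃ e : S ≃[L] S, ∀ i, e (a i) = b i

variable {ι : Type}

theorem IsSaturatedHomogeneous.suffSaturated {S : Type} [LinearOrder S] [Colored ι S]
    (h : IsSaturatedHomogeneous (CLOLang ι) S) : SuffSaturated ι S Colored.color := by
  refine ⟨fun m a p hp => ?_, fun m a b hab => ?_⟩
  · obtain ⟨y, hy⟩ := h.exists_realize m Unit a p fun q hq => by
      obtain ⟨x, hx⟩ := hp q hq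
      exact ⟨fun _ => x, hx⟩
    exact ⟨y (), hy⟩
  · obtain ⟨e, he⟩ := h.exists_equiv m a b hab
    exact ⟨e.toEquiv, fun x y => (lt_iff_of_equiv e x y).symm,
      fun k x => (color_iff_of_equiv e k x).symm, he⟩

theorem IsSaturatedHomogeneous.exists_sameType {L : FirstOrder.Language.{0, 0}} {S A : Type}
    [L.Structure S] [L.Structure A] [Nonempty A] [Nonempty S] (h : IsSaturatedHomogeneous L S)
    (hAS : A ≅[L] S) {Y : Type} [Countable Y] (x : Y → A) :
    ∃ y : Y → S, SameType (L := L) x y := by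
  obtain ⟨y, hy⟩ := h.exists_realize 0 Y Fin.elim0
    {φ | φ.Realize (Sum.elim x (Fin.elim0 : Fin 0 → A))} fun q hq => by
      obtain ⟨χ, hχ⟩ := exists_formula_forall_mem q
      obtain ⟨u, hu⟩ := exists_realize_of_elementarilyEquivalent hAS χ
        ⟨Sum.elim x Fin.elim0, (hχ A _).2 fun φ hφ => hq hφ⟩
      refine ⟨u ∘ Sum.inl, ?_⟩
      have : Sum.elim (u ∘ Sum.inl) Fin.elim0 = u :=
        funext fun i => by rcases i with i | i; exacts [rfl, i.elim0]
      rw [this]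
      exact (hχ S u).1 hu
  have key : ∀ φ : L.Formula Y, φ.Realize x → φ.Realize y := by
    intro φ hφ
    have := hy (φ.relabel Sum.inl) (by
      rw [mem_ofPred_eq, Formula.realize_relabel]
      exact hφ)
    rwa [Formula.realize_relabel] at this
  refine ⟨y, fun φ => ⟨key φ, fun hφ => ?_⟩⟩
  by_contra hn
  exact key φ.not (Formula.realize_not.2 hn) hφ

end Saturated

section Intervals

variable {ι : Type}

theorem icc_subtype_elementarilyEquivalent {M : Type} [LinearOrder M] [Colored ι M] (s : Set M)
    (hs : s.OrdConnected) (a b : s) :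
    Set.Icc a b ≅[CLOLang ι] Set.Icc (a : M) b := by
  refine SameType.elementarilyEquivalent iccF ((valEmb (ι := ι) s).comp (valEmb _)) (valEmb _)
    (p := ![(a : M), b]) (p' := ![(a : M), b]) (fun x => ?_)
    (fun x => by rw [mem_range_valEmb, realize_iccF]) fun φ => Iff.rfl
  rw [realize_iccF]
  constructor
  · rintro ⟨y, rfl⟩
    exact y.2
  · intro hx
    exact ⟨⟨⟨x, hs.out a.2 b.2 hx⟩, hx⟩, rfl⟩

theorem IntervalsIn.of_elementaryEmbedding {𝓛 : Set (CLOLang ι).Theory} {M N : Type}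
    [LinearOrder M] [Colored ι M] [LinearOrder N] [Colored ι N] (h : IntervalsIn 𝓛 N)
    (f : M ↪ₑ[CLOLang ι] N) : IntervalsIn 𝓛 M := by
  intro a b hab
  have hst : SameType (L := CLOLang ι) ![a, b] ![f a, f b] := by
    have h2 : ⇑f ∘ ![a, b] = ![f a, f b] := by
      funext i
      fin_cases i <;> rfl
    exact h2 ▸ sameType_elementaryEmbedding f ![a, b]
  have hle : f a ≤ f b := by
    have := (hst (∼(ltF 1 0))).1 (by simpa using hab)
    simpa using this
  have := h (f a) (f b) hle
  rwa [← icc_elementarilyEquivalent hst] at this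

end Intervals

section ConvexTypes

variable {ι : Type} {M₀ : Type} [LinearOrder M₀] [Colored ι M₀]

theorem convexFml_of_forall {φ : (CLOLang ι).Formula Unit}
    (h : ∀ (B : Type) [LinearOrder B] [Colored ι B],
      Set.OrdConnected {x : B | φ.Realize fun _ => x}) : ConvexFml ι M₀ Colored.color φ :=
  fun B iB cB _ => @h B iB ⟨cB⟩

theorem _root_.ConvexFml.ordConnected {φ : (CLOLang ι).Formula Unit}
    (h : ConvexFml ι M₀ Colored.color φ) {A : Type} [LinearOrder A] [Colored ι A]
    (hA : A ≅[CLOLang ι] M₀) : Set.OrdConnected {x : A | φ.Realize fun _ => x} :=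
  h A _ Colored.color hA

theorem ordConnected_typeSet {Φ : Set ((CLOLang ι).Formula Unit)}
    (h : ∀ φ ∈ Φ, ConvexFml ι M₀ Colored.color φ) {A : Type} [LinearOrder A] [Colored ι A]
    (hA : A ≅[CLOLang ι] M₀) : (TypeSet ι A Colored.color Φ).OrdConnected :=
  ⟨fun _ hx _ hy _ hz φ hφ => ((h φ hφ).ordConnected hA).out (hx φ hφ) (hy φ hφ) hz⟩

theorem mem_of_realize {Φ : Set ((CLOLang ι).Formula Unit)}
    (hΦ : IsConvexType ι M₀ Colored.color Φ) {A : Type} [LinearOrder A] [Colored ι A]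
    (hA : A ≅[CLOLang ι] M₀) {a : A} (ha : a ∈ TypeSet ι A Colored.color Φ)
    {ψ : (CLOLang ι).Formula Unit} (hψ : ConvexFml ι M₀ Colored.color ψ)
    (h : ψ.Realize fun _ => a) : ψ ∈ Φ := by
  refine hΦ.2.2 ψ hψ ⟨A, _, Colored.color, hA, a, ?_⟩
  rintro φ (rfl | hφ)
  exacts [h, ha φ hφ]

theorem eq_of_mem_typeSet {Φ Ψ : Set ((CLOLang ι).Formula Unit)}
    (hΦ : IsConvexType ι M₀ Colored.color Φ) (hΨ : IsConvexType ι M₀ Colored.color Ψ) {A : Type}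
    [LinearOrder A] [Colored ι A] (hA : A ≅[CLOLang ι] M₀) {a : A}
    (ha : a ∈ TypeSet ι A Colored.color Φ) (ha' : a ∈ TypeSet ι A Colored.color Ψ) : Ψ = Φ :=
  Subset.antisymm (fun ψ hψ => mem_of_realize hΦ hA ha (hΨ.1 ψ hψ) (ha' ψ hψ))
    fun ψ hψ => mem_of_realize hΨ hA ha' (hΦ.1 ψ hψ) (ha ψ hψ)

/-- Lying below every realization of `ψ` is definable. -/
theorem exists_formula_below (ψ : (CLOLang ι).Formula Unit) :
    ∃ θ : (CLOLang ι).Formula Unit, ∀ (A : Type) [LinearOrder A] [Colored ι A] (x : A),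
      (θ.Realize fun _ => x) ↔ ∀ w : A, (ψ.Realize fun _ => w) → x < w := by
  obtain ⟨θ, hθ⟩ := exists_formula_realize_iff_exists
    (ψ.relabel Sum.inr ⊓ ∼(ltF (Sum.inl ()) (Sum.inr ())) : (CLOLang ι).Formula (Unit ⊕ Unit))
  refine ⟨∼θ, fun A _ _ x => ?_⟩
  haveI : Nonempty A := ⟨x⟩
  rw [Formula.realize_not, hθ]
  simp only [Formula.realize_inf, Formula.realize_relabel, Formula.realize_not, realize_ltF,
    Sum.elim_inl, Sum.elim_inr, Sum.elim_comp_inr, not_exists, not_and, not_not]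
  exact ⟨fun h w hw => h _ hw, fun h w hw => h _ hw⟩

/-- Lying above every realization of `ψ` is definable. -/
theorem exists_formula_above (ψ : (CLOLang ι).Formula Unit) :
    ∃ θ : (CLOLang ι).Formula Unit, ∀ (A : Type) [LinearOrder A] [Colored ι A] (x : A),
      (θ.Realize fun _ => x) ↔ ∀ w : A, (ψ.Realize fun _ => w) → w < x := by
  obtain ⟨θ, hθ⟩ := exists_formula_realize_iff_exists
    (ψ.relabel Sum.inr ⊓ ∼(ltF (Sum.inr ()) (Sum.inl ())) : (CLOLang ι).Formula (Unit ⊕ Unit))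
  refine ⟨∼θ, fun A _ _ x => ?_⟩
  haveI : Nonempty A := ⟨x⟩
  rw [Formula.realize_not, hθ]
  simp only [Formula.realize_inf, Formula.realize_relabel, Formula.realize_not, realize_ltF,
    Sum.elim_inl, Sum.elim_inr, Sum.elim_comp_inr, not_exists, not_and, not_not]
  exact ⟨fun h w hw => h _ hw, fun h w hw => h _ hw⟩

/-- The convex hull of a definable set is definable. -/
theorem exists_formula_hull (ψ : (CLOLang ι).Formula Unit) :
    ∃ θ : (CLOLang ι).Formula Unit, ∀ (A : Type) [LinearOrder A] [Colored ι A] (x : A),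
      (θ.Realize fun _ => x) ↔
        ∃ u v : A, (ψ.Realize fun _ => u) ∧ (ψ.Realize fun _ => v) ∧ u ≤ x ∧ x ≤ v := by
  obtain ⟨θ₁, h₁⟩ := exists_formula_below ψ
  obtain ⟨θ₂, h₂⟩ := exists_formula_above ψ
  refine ⟨∼θ₁ ⊓ ∼θ₂, fun A _ _ x => ?_⟩
  rw [Formula.realize_inf, Formula.realize_not, Formula.realize_not, h₁, h₂]
  push Not
  constructor
  · rintro ⟨⟨u, hu, hux⟩, v, hv, hxv⟩
    exact ⟨u, v, hu, hv, hux, hxv⟩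
  · rintro ⟨u, v, hu, hv, hux, hxv⟩
    exact ⟨⟨u, hu, hux⟩, v, hv, hxv⟩

/-- The convex formulas satisfied by a point form a convex type. -/
theorem isConvexType_of_point {A : Type} [LinearOrder A] [Colored ι A]
    (hA : A ≅[CLOLang ι] M₀) (x : A) :
    IsConvexType ι M₀ Colored.color
      {ψ | ConvexFml ι M₀ Colored.color ψ ∧ ψ.Realize fun _ => x} := by
  refine ⟨fun ψ hψ => hψ.1, ⟨A, _, Colored.color, hA, x, fun ψ hψ => hψ.2⟩,
    fun ψ hψ ⟨B, iB, cB, _, b, hb⟩ => ⟨hψ, ?_⟩⟩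
  letI : Colored ι B := ⟨cB⟩
  by_contra hx
  have hbψ : ψ.Realize fun _ => b := hb ψ (mem_insert _ _)
  obtain ⟨θ₁, h₁⟩ := exists_formula_below ψ
  obtain ⟨θ₂, h₂⟩ := exists_formula_above ψ
  by_cases h : θ₁.Realize fun _ => x
  · have hc : ConvexFml ι M₀ Colored.color θ₁ := convexFml_of_forall fun C _ _ =>
      ⟨fun y _ z hz t ht => (h₁ C t).2 fun w hw => ht.2.trans_lt ((h₁ C z).1 hz w hw)⟩
    have hbθ : θ₁.Realize fun _ => b := hb θ₁ (mem_insert_of_mem _ ⟨hc, h⟩)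
    exact lt_irrefl _ ((h₁ B b).1 hbθ b hbψ)
  · have h' : θ₂.Realize fun _ => x := by
      rw [h₁] at h
      push Not at h
      obtain ⟨u, hu, hux⟩ := h
      refine (h₂ A x).2 fun v hv => ?_
      by_contra hvx
      exact hx ((hψ.ordConnected hA).out hu hv ⟨hux, not_lt.1 hvx⟩)
    have hc : ConvexFml ι M₀ Colored.color θ₂ := convexFml_of_forall fun C _ _ =>
      ⟨fun y hy z _ t ht => (h₂ C t).2 fun w hw => ((h₂ C y).1 hy w hw).trans_le ht.1⟩
    have hbθ : θ₂.Realize fun _ => b := hb θ₂ (mem_insert_of_mem _ ⟨hc, h'⟩)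
    exact lt_irrefl _ ((h₂ B b).1 hbθ b hbψ)

/-- Any two realization sets of an isolated convex type have the same theory. -/
theorem typeSet_elementarilyEquivalent_of_isolated {Φ : Set ((CLOLang ι).Formula Unit)}
    (hiso : IsolatedCT ι M₀ Colored.color Φ) {A B : Type}
    [LinearOrder A] [Colored ι A] [LinearOrder B] [Colored ι B] (hA : A ≅[CLOLang ι] M₀)
    (hB : B ≅[CLOLang ι] M₀) :
    TypeSet ι A Colored.color Φ ≅[CLOLang ι] TypeSet ι B Colored.color Φ := by
  obtain ⟨φ, hφ, hc, huniq⟩ := hiso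
  have key : ∀ (C : Type) [LinearOrder C] [Colored ι C], (C ≅[CLOLang ι] M₀) → ∀ x : C,
      x ∈ TypeSet ι C Colored.color Φ ↔ φ.Realize fun _ => x := by
    refine fun C _ _ hC x => ⟨fun hx => hx φ hφ, fun hx => ?_⟩
    rw [← huniq _ (isConvexType_of_point hC x) ⟨hc, hx⟩]
    exact fun ψ hψ => hψ.2
  refine SameType.elementarilyEquivalent (φ.relabel Sum.inr : (CLOLang ι).Formula (Empty ⊕ Unit))
    (valEmb _) (valEmb _) (p := Empty.elim) (p' := Empty.elim) ?_ ?_ ?_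
  · intro x
    rw [mem_range_valEmb, key A hA, Formula.realize_relabel, Sum.elim_comp_inr]
  · intro x
    rw [mem_range_valEmb, key B hB, Formula.realize_relabel, Sum.elim_comp_inr]
  · intro χ
    have := elementarilyEquivalent_iff.1 (hA.trans hB.symm) χ
    rwa [Sentence.Realize, Sentence.Realize, Subsingleton.elim (default : Empty → A) Empty.elim,
      Subsingleton.elim (default : Empty → B) Empty.elim] at this

theorem typeSet_nonempty {Φ : Set ((CLOLang ι).Formula Unit)}
    (hΦ : TypeConsistent ι M₀ Colored.color Φ) {S : Type} [LinearOrder S] [Colored ι S]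
    (hS : IsSaturatedHomogeneous (CLOLang ι) S) (hSM : S ≅[CLOLang ι] M₀) :
    (TypeSet ι S Colored.color Φ).Nonempty := by
  obtain ⟨B, iB, cB, hB, b, hb⟩ := hΦ
  letI : Colored ι B := ⟨cB⟩
  haveI : Nonempty B := ⟨b⟩
  have hBS : B ≅[CLOLang ι] S := ElementarilyEquivalent.trans hB hSM.symm
  haveI : Nonempty S := nonempty_of_elementarilyEquivalent hBS
  obtain ⟨y, hy⟩ := hS.exists_sameType hBS fun _ : Unit => b
  exact ⟨y (), fun φ hφ => (hy φ).1 (hb φ hφ)⟩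

theorem exists_saturated_model [Nonempty M₀] : ∃ (S : Type) (_ : LinearOrder S) (_ : Colored ι S),
    (S ≅[CLOLang ι] M₀) ∧ IsSaturatedHomogeneous (CLOLang ι) S := by
  obtain ⟨S, iS, f, h₁, h₂⟩ := exists_saturated_homogeneous (L := CLOLang ι) M₀
  have h : S ≅[CLOLang ι] M₀ := f.elementarilyEquivalent.symm
  obtain ⟨i, c, rfl⟩ := exists_eq_CLOStr h.symm
  letI : Colored ι S := ⟨c⟩
  exact ⟨S, i, ⟨c⟩, h, ⟨h₁, h₂⟩⟩

theorem intervalsIn_typeSet {Φ : Set ((CLOLang ι).Formula Unit)}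
    (hΦ : ∀ φ ∈ Φ, ConvexFml ι M₀ Colored.color φ) {S A : Type} [LinearOrder S] [Colored ι S]
    [LinearOrder A] [Colored ι A] (hS : IsSaturatedHomogeneous (CLOLang ι) S)
    (hSM : S ≅[CLOLang ι] M₀) (hA : A ≅[CLOLang ι] M₀) :
    IntervalsIn (intervalTheories ι (TypeSet ι S Colored.color Φ))
      (TypeSet ι A Colored.color Φ) := by
  intro a b hab
  haveI : Nonempty A := ⟨a⟩
  have hAS : A ≅[CLOLang ι] S := hA.trans hSM.symm
  haveI : Nonempty S := nonempty_of_elementarilyEquivalent hAS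
  obtain ⟨y, hy⟩ := hS.exists_sameType hAS ![(a : A), b]
  obtain ⟨a', b', rfl⟩ : ∃ a' b', y = ![a', b'] :=
    ⟨y 0, y 1, by funext i; fin_cases i <;> rfl⟩
  have hmem : ∀ k : Fin 2, ![(a : A), b] k ∈ TypeSet ι A Colored.color Φ →
      ![a', b'] k ∈ TypeSet ι S Colored.color Φ := by
    intro k hk φ hφ
    have := (hy (φ.relabel fun _ => k)).1 (Formula.realize_relabel.2 (hk φ hφ))
    exact Formula.realize_relabel.1 this
  have hle : a' ≤ b' := by
    have := (hy (∼(ltF 1 0))).1 (by simpa using hab)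
    simpa using this
  have h₁ := icc_subtype_elementarilyEquivalent (ι := ι) _ (ordConnected_typeSet hΦ hA) a b
  have h₂ := icc_subtype_elementarilyEquivalent (ι := ι) _ (ordConnected_typeSet hΦ hSM)
    ⟨a', hmem 0 a.2⟩ ⟨b', hmem 1 b.2⟩
  exact ⟨⟨a', hmem 0 a.2⟩, ⟨b', hmem 1 b.2⟩, hle,
    (h₁.trans (icc_elementarilyEquivalent hy)).trans h₂.symm⟩

/-- A model of a theory of intervals in `𝓛` has a countable elementary submodel of this kind. -/
theorem IntervalsIn.exists_countable [Countable ι] {𝓛 : Set (CLOLang ι).Theory} {P : Type}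
    [LinearOrder P] [Colored ι P] (h : IntervalsIn 𝓛 P) :
    ∃ (N : Type) (_ : LinearOrder N) (_ : Colored ι N), Countable N ∧ IntervalsIn 𝓛 N ∧
      (CLOLang ι).completeTheory P = (CLOLang ι).completeTheory N := by
  rcases isEmpty_or_nonempty P with hP | hP
  · exact ⟨P, _, _, inferInstance, h, rfl⟩
  obtain ⟨N, iN, f, -, hN, -⟩ :=
    exists_countable_elementaryEmbedding (L := CLOLang ι) (M := P) Fin.elim0
  have hPN : P ≅[CLOLang ι] N := f.elementarilyEquivalent.symm
  obtain ⟨i, c, rfl⟩ := exists_eq_CLOStr hPN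
  letI : Colored ι N := ⟨c⟩
  exact ⟨N, i, ⟨c⟩, hN, h.of_elementaryEmbedding f, hPN⟩

end ConvexTypes

section Omitting

variable {ι : Type}

/-- An automorphism may be restricted to an invariant convex set and extended by the identity. -/
theorem exists_equiv_restrict {S : Type} [LinearOrder S] [Colored ι S] (g : S ≃[CLOLang ι] S)
    (C : Set S) (hC : C.OrdConnected) (hg : ∀ x, g x ∈ C ↔ x ∈ C) :
    ∃ h : S ≃[CLOLang ι] S, (∀ x ∈ C, h x = g x) ∧ ∀ x ∉ C, h x = x := by
  classical
  let e : S ≃ S :=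
    { toFun := fun x => if x ∈ C then g x else x
      invFun := fun x => if x ∈ C then g.symm x else x
      left_inv := fun x => by
        by_cases hx : x ∈ C <;> simp [hx, hg]
      right_inv := fun x => by
        have hg' : g.symm x ∈ C ↔ x ∈ C := by rw [← hg, g.apply_symm_apply]
        by_cases hx : x ∈ C <;> simp [hx, hg'] }
  have he : ∀ x ∈ C, e x = g x := fun x hx => if_pos hx
  have he' : ∀ x ∉ C, e x = x := fun x hx => if_neg hx
  have hout : ∀ x ∈ C, ∀ y ∈ C, ∀ z ∉ C, x < z → y < z := by
    intro x hx y hy z hz hxz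
    by_contra hyz
    exact hz (hC.out hx hy ⟨hxz.le, not_lt.1 hyz⟩)
  have hout' : ∀ x ∈ C, ∀ y ∈ C, ∀ z ∉ C, z < x → z < y := by
    intro x hx y hy z hz hxz
    by_contra hyz
    exact hz (hC.out hy hx ⟨not_lt.1 hyz, hxz.le⟩)
  have hmono : StrictMono e := by
    intro x y hxy
    by_cases hx : x ∈ C <;> by_cases hy : y ∈ C
    · rw [he x hx, he y hy]
      exact (lt_iff_of_equiv g x y).2 hxy
    · rw [he x hx, he' y hy]
      exact hout x hx _ ((hg x).2 hx) y hy hxy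
    · rw [he' x hx, he y hy]
      exact hout' y hy _ ((hg y).2 hy) x hx hxy
    · rwa [he' x hx, he' y hy]
  refine ⟨equivOfOrderIso ⟨e, hmono.le_iff_le⟩ fun i x => ?_, he, he'⟩
  change e x ∈ _ ↔ _
  by_cases hx : x ∈ C
  · rw [he x hx]
    exact color_iff_of_equiv g i x
  · rw [he' x hx]

variable {M₀ : Type} [LinearOrder M₀] [Colored ι M₀]

theorem isolated_of_forall_mem_typeSet {Φ : Set ((CLOLang ι).Formula Unit)}
    (hΦ : IsConvexType ι M₀ Colored.color Φ) {S : Type} [LinearOrder S] [Colored ι S]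
    (hS : IsSaturatedHomogeneous (CLOLang ι) S) (hSM : S ≅[CLOLang ι] M₀)
    (θ : (CLOLang ι).Formula Unit) (a : S) (ha : θ.Realize fun _ => a)
    (h : ∀ b : S, (θ.Realize fun _ => b) → b ∈ TypeSet ι S Colored.color Φ) :
    IsolatedCT ι M₀ Colored.color Φ := by
  obtain ⟨η, hη⟩ := exists_formula_hull θ
  have hc : ConvexFml ι M₀ Colored.color η := convexFml_of_forall fun C _ _ =>
    ⟨fun y hy z hz t ht => by
      obtain ⟨u, -, hu, -, huy, -⟩ := (hη C y).1 hy
      obtain ⟨-, v, -, hv, -, hzv⟩ := (hη C z).1 hz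
      exact (hη C t).2 ⟨u, v, hu, hv, huy.trans ht.1, ht.2.trans hzv⟩⟩
  refine ⟨η, mem_of_realize hΦ hSM (h a ha) hc ((hη S a).2 ⟨a, a, ha, ha, le_rfl, le_rfl⟩), hc,
    fun Ψ hΨ hηΨ => ?_⟩
  obtain ⟨b, hb⟩ := typeSet_nonempty hΨ.2.1 hS hSM
  obtain ⟨u, v, hu, hv, hub, hbv⟩ := (hη S b).1 (hb η hηΨ)
  exact eq_of_mem_typeSet hΦ hΨ hSM
    ((ordConnected_typeSet hΦ.1 hSM).out (h u hu) (h v hv) ⟨hub, hbv⟩) hb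

/-- In a saturated model, a formula over parameters outside the realizations of a non-isolated
convex type is realized outside of them. -/
theorem exists_realize_notMem_typeSet {Φ : Set ((CLOLang ι).Formula Unit)}
    (hΦ : IsConvexType ι M₀ Colored.color Φ) (hiso : ¬ IsolatedCT ι M₀ Colored.color Φ) {S : Type}
    [LinearOrder S] [Colored ι S] (hS : IsSaturatedHomogeneous (CLOLang ι) S)
    (hSM : S ≅[CLOLang ι] M₀) (n : ℕ) (φ : (CLOLang ι).Formula (Fin (n + 1))) (x : Fin n → S)
    (hx : ∀ i, x i ∉ TypeSet ι S Colored.color Φ)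
    (h : ∃ a, φ.Realize (Fin.snoc x a : Fin (n + 1) → S)) :
    ∃ b ∉ TypeSet ι S Colored.color Φ, φ.Realize (Fin.snoc x b : Fin (n + 1) → S) := by
  classical
  obtain ⟨a, ha⟩ := h
  by_contra! hcon
  have haP : a ∈ TypeSet ι S Colored.color Φ := by
    by_contra hn
    exact hcon a hn ha
  have hψ : ∀ i, ∃ ψ ∈ Φ, ¬ ψ.Realize fun _ => x i := by
    intro i
    by_contra! hn
    exact hx i hn
  choose ψ hψΦ hψx using hψ
  let C : Set S := {z | ∀ i, (ψ i).Realize fun _ => z}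
  have hC : C.OrdConnected := ⟨fun u hu v hv z hz i =>
    ((hΦ.1 _ (hψΦ i)).ordConnected hSM).out (hu i) (hv i) hz⟩
  have haC : a ∈ C := fun i => haP _ (hψΦ i)
  have hxC : ∀ i, x i ∉ C := fun i hi => hψx i (hi i)
  let ρ : Fin (n + 1) → Unit ⊕ Fin n := Fin.snoc Sum.inr (Sum.inl ())
  have hρ : ∀ y : Unit → S, Sum.elim y x ∘ ρ = (Fin.snoc x (y ()) : Fin (n + 1) → S) := by
    intro y
    rw [Fin.comp_snoc]
    rfl
  let p : Set ((CLOLang ι).Formula (Unit ⊕ Fin n)) :=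
    insert (φ.relabel ρ).not {χ | ∃ θ : (CLOLang ι).Formula Unit,
      (θ.Realize fun _ => a) ∧ χ = θ.relabel Sum.inl}
  have hp : ¬ FinSat x p := by
    intro hfin
    obtain ⟨y, hy⟩ := hS.exists_realize n Unit x p hfin
    have hφ : ¬ φ.Realize (Fin.snoc x (y ()) : Fin (n + 1) → S) := by
      have := hy _ (mem_insert _ _)
      rwa [Formula.realize_not, Formula.realize_relabel, hρ] at this
    have hy' : ∀ θ : (CLOLang ι).Formula Unit, (θ.Realize fun _ => a) → θ.Realize y := by
      intro θ hθ
      have := hy _ (mem_insert_of_mem _ ⟨θ, hθ, rfl⟩)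
      rwa [Formula.realize_relabel, Sum.elim_comp_inl] at this
    have hst : SameType (L := CLOLang ι) (fun _ : Fin 1 => a) fun _ : Fin 1 => y () := by
      have key : ∀ θ : (CLOLang ι).Formula (Fin 1), (θ.Realize fun _ => a) →
          θ.Realize fun _ => y () := by
        intro θ hθ
        have := hy' (θ.relabel fun _ => ()) (Formula.realize_relabel.2 hθ)
        exact Formula.realize_relabel.1 this
      refine fun θ => ⟨key θ, fun hθ => ?_⟩
      by_contra hn
      exact key θ.not (Formula.realize_not.2 hn) hθ
    obtain ⟨g, hg⟩ := hS.exists_equiv 1 _ _ hst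
    obtain ⟨f, hf, hf'⟩ := exists_equiv_restrict g C hC fun z =>
      forall_congr' fun i => StrongHomClass.realize_formula g (ψ i)
    refine hφ ?_
    have : f ∘ (Fin.snoc x a : Fin (n + 1) → S) = Fin.snoc x (y ()) := by
      rw [Fin.comp_snoc, hf a haC, hg 0]
      congr 1
      exact funext fun i => hf' _ (hxC i)
    rw [← this]
    exact (StrongHomClass.realize_formula f φ).2 ha
  rw [FinSat] at hp
  push Not at hp
  obtain ⟨q, hqp, hq⟩ := hp
  have hθ : ∀ χ ∈ q, ∃ θ : (CLOLang ι).Formula Unit, (θ.Realize fun _ => a) ∧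
      (χ = (φ.relabel ρ).not ∨ χ = θ.relabel Sum.inl) := by
    intro χ hχ
    rcases hqp hχ with h | ⟨θ, hθ, rfl⟩
    · exact ⟨⊤, Formula.realize_top.2 trivial, Or.inl h⟩
    · exact ⟨θ, hθ, Or.inr rfl⟩
  choose! θ hθa hθχ using hθ
  obtain ⟨Θ, hΘ⟩ := exists_formula_forall_mem (q.image θ)
  refine hiso (isolated_of_forall_mem_typeSet hΦ hS hSM Θ a ((hΘ S _).2 ?_) fun b hb => ?_)
  · simpa using hθa
  · by_contra hbP
    obtain ⟨χ, hχq, hχ⟩ := hq fun _ => b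
    have hbθ := (hΘ S _).1 hb (θ χ) (Finset.mem_image_of_mem θ hχq)
    rcases hθχ χ hχq with h | h
    · rw [h, Formula.realize_not, not_not, Formula.realize_relabel, hρ] at hχ
      exact hcon b hbP hχ
    · rw [h, Formula.realize_relabel, Sum.elim_comp_inl] at hχ
      exact hχ hbθ

/-- A non-isolated convex type is omitted in some model. -/
theorem exists_typeSet_isEmpty {Φ : Set ((CLOLang ι).Formula Unit)}
    (hΦ : IsConvexType ι M₀ Colored.color Φ) (hiso : ¬ IsolatedCT ι M₀ Colored.color Φ) {S : Type}
    [LinearOrder S] [Colored ι S] [Nonempty S] (hS : IsSaturatedHomogeneous (CLOLang ι) S)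
    (hSM : S ≅[CLOLang ι] M₀) :
    ∃ (A : Type) (_ : LinearOrder A) (_ : Colored ι A),
      (A ≅[CLOLang ι] M₀) ∧ IsEmpty (TypeSet ι A Colored.color Φ) := by
  obtain ⟨K, hK⟩ := exists_elementarySubstructure_of_set (L := CLOLang ι)
    (TypeSet ι S Colored.color Φ)ᶜ fun n φ x hx h =>
      exists_realize_notMem_typeSet hΦ hiso hS hSM n φ x hx h
  have hout : ∀ z : K, ∃ φ ∈ Φ, ¬ φ.Realize fun _ => z := by
    intro z
    have hz : (z : S) ∈ (TypeSet ι S Colored.color Φ)ᶜ := hK ▸ z.2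
    by_contra! hn
    exact hz fun φ hφ => (K.subtype.map_formula φ fun _ => z).2 (hn φ hφ)
  have hSK : K ≅[CLOLang ι] S := K.subtype.elementarilyEquivalent
  have hKM : K ≅[CLOLang ι] M₀ := hSK.trans hSM
  obtain ⟨A, iA, hA, hAΦ⟩ : ∃ (A : Type) (_ : (CLOLang ι).Structure A), (A ≅[CLOLang ι] M₀) ∧
      ∀ z : A, ∃ φ ∈ Φ, ¬ φ.Realize fun _ => z := ⟨K, inferInstance, hKM, hout⟩
  haveI : Nonempty M₀ := nonempty_of_elementarilyEquivalent hSM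
  obtain ⟨i, c, rfl⟩ := exists_eq_CLOStr hA.symm
  refine ⟨A, i, ⟨c⟩, hA, ⟨fun z => ?_⟩⟩
  obtain ⟨φ, hφ, hn⟩ := hAΦ z
  exact hn (z.2 φ hφ)

end Omitting

end CLO

theorem stmt12 {ι : Type} [Countable ι] {M₀ : Type} [LinearOrder M₀] (c₀ : ι → Set M₀)
    (hLS : LocallySimple ι M₀ c₀)
    (Φ : Set ((CLOLang ι).Formula Unit)) (hΦ : IsConvexType ι M₀ c₀ Φ) :
    (TheoriesAt ι M₀ c₀ Φ).Finite ∧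
      (∀ T ∈ TheoriesAt ι M₀ c₀ Φ, Aleph0CatTheory ι T) ∧
      ((∃ T, TheoriesAt ι M₀ c₀ Φ = {T}) ↔ IsolatedCT ι M₀ c₀ Φ) := by

  letI : CLO.Colored ι M₀ := ⟨c₀⟩
  have hM₀ : Nonempty M₀ := by
    obtain ⟨B, iB, cB, hB, b, -⟩ := hΦ.2.1
    letI : CLO.Colored ι B := ⟨cB⟩
    haveI : Nonempty B := ⟨b⟩
    exact CLO.nonempty_of_elementarilyEquivalent (L := CLOLang ι) (M := B) (N := M₀) hB
  obtain ⟨S, iS, jS, hSM, hS⟩ := CLO.exists_saturated_model (ι := ι) (M₀ := M₀)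
  have hne := CLO.typeSet_nonempty hΦ.2.1 hS hSM
  haveI := hne.to_subtype
  have hP : CLO.FinTypes (CLOLang ι) (TypeSet ι S CLO.Colored.color Φ) :=
    CLO.finTypes_of_aleph0CatTheory (hLS S CLO.Colored.color hSM hS.suffSaturated Φ hΦ)
  have hfin := CLO.intervalTheories_finite hP
  have hcat := CLO.aleph0CatTheory_of_mem_intervalTheories hP
  have hN : ∀ T ∈ TheoriesAt ι M₀ c₀ Φ, ∃ (N : Type) (_ : LinearOrder N) (_ : CLO.Colored ι N),
      Countable N ∧
        CLO.IntervalsIn (CLO.intervalTheories ι (TypeSet ι S CLO.Colored.color Φ)) N ∧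
        T = (CLOLang ι).completeTheory N := by
    rintro _ ⟨A, iA, cA, hA, rfl⟩
    letI : CLO.Colored ι A := ⟨cA⟩
    exact (CLO.intervalsIn_typeSet hΦ.1 hS hSM hA).exists_countable
  refine ⟨(CLO.finite_theories_of_intervalsIn hfin hcat).subset hN, fun T hT => ?_, ?_, ?_⟩
  · obtain ⟨N, i, j, hc, hI, rfl⟩ := hN T hT
    exact CLO.aleph0CatTheory_of_finTypes (CLO.finTypes_of_intervalsIn hfin hcat hI)
  · rintro ⟨T, hT⟩
    by_contra hiso
    haveI : Nonempty S := ⟨hne.some⟩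
    obtain ⟨A, iA, jA, hA, hempty⟩ := CLO.exists_typeSet_isEmpty hΦ hiso hS hSM
    have h₁ : (CLOLang ι).completeTheory (TypeSet ι S CLO.Colored.color Φ) = T :=
      hT.subset ⟨S, iS, CLO.Colored.color, hSM, rfl⟩
    have h₂ : (CLOLang ι).completeTheory (TypeSet ι A CLO.Colored.color Φ) = T :=
      hT.subset ⟨A, iA, CLO.Colored.color, hA, rfl⟩
    exact not_isEmpty_iff.2
      (CLO.nonempty_of_elementarilyEquivalent (L := CLOLang ι) (h₁.trans h₂.symm)) hempty
  · intro hiso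
    refine ⟨_, Set.eq_singleton_iff_unique_mem.2 ⟨⟨S, iS, CLO.Colored.color, hSM, rfl⟩, ?_⟩⟩
    rintro _ ⟨A, iA, cA, hA, rfl⟩
    letI : CLO.Colored ι A := ⟨cA⟩
    exact CLO.typeSet_elementarilyEquivalent_of_isolated hiso hA hSM
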